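/- Let n ≥ 1 be an integer, θ ∈ (0, π/2) and 1 ≤ k ≤ n. Let s be a smooth capillary function on C_θ with τ[s] > 0 and 1-homogeneous extension G, and let υ be a C² capillary function on C_θ with 1-homogeneous extension Υ. Suppose the linearized σ_k operator annihilates υ, i.e., for every ζ ∈ C_θ the function t ↦ σ_k(τ[s + tυ])(ζ) (which equals the k-th elementary symmetric polynomial of the eigenvalues of D²(G + tΥ)(u), u = ζ + cos θ E_{n+1}, a polynomial in t) has vanishing derivative at t = 0. Then there exists a vector a ∈ ℝ^{n+1} with ⟨a, E_{n+1}⟩ = 0 such that υ(ζ) = ⟨a, ζ⟩ for all ζ ∈ C_θ. -/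

import Mathlib

open MeasureTheory Real Set
open scoped RealInnerProductSpace

noncomputable section

abbrev V (n : ℕ) := EuclideanSpace ℝ (Fin (n + 1))

/-- The vertical unit vector `E_{n+1}`. -/
def Etop (n : ℕ) : V n := EuclideanSpace.single (Fin.last n) 1

/-- The spherical cap `S^n_θ`. -/
def sphCap (n : ℕ) (θ : ℝ) : Set (V n) :=
  {u | ‖u‖ = 1 ∧ Real.cos θ ≤ u (Fin.last n)}

/-- The boundary circle `∂S^n_θ`. -/
def sphCapBdry (n : ℕ) (θ : ℝ) : Set (V n) :=
  {u | ‖u‖ = 1 ∧ u (Fin.last n) = Real.cos θ}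

/-- The capillary cap `C_θ`. -/
def capCap (n : ℕ) (θ : ℝ) : Set (V n) :=
  {ζ | 0 ≤ ζ (Fin.last n) ∧ ‖ζ + Real.cos θ • Etop n‖ = 1}

/-- The open cone over `S^n_θ`. -/
def coneCap (n : ℕ) (θ : ℝ) : Set (V n) :=
  {x | ∃ l : ℝ, 0 < l ∧ ∃ u ∈ sphCap n θ, x = l • u}

/-- `G` is a positively 1-homogeneous extension of `g : C_θ → ℝ` which is `C^m` on an
open neighborhood of the cone over `S^n_θ`. -/
def IsHomExt (n : ℕ) (θ : ℝ) (m : ℕ∞) (g G : V n → ℝ) : Prop :=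
  (∃ U : Set (V n), IsOpen U ∧ coneCap n θ ⊆ U ∧ ContDiffOn ℝ m G U) ∧
  (∀ l : ℝ, 0 < l → ∀ u ∈ sphCap n θ, G (l • u) = l * G u) ∧
  (∀ ζ ∈ capCap n θ, G (ζ + Real.cos θ • Etop n) = g ζ)

/-- The Hessian of `G` at `u` as a quadratic/bilinear form. -/
def hessQ (n : ℕ) (G : V n → ℝ) (u v w : V n) : ℝ :=
  fderiv ℝ (fderiv ℝ G) u v w

/-- The Hessian matrix `D²G(u)` in the standard coordinates. -/
def hessM (n : ℕ) (G : V n → ℝ) (u : V n) : Matrix (Fin (n + 1)) (Fin (n + 1)) ℝ :=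
  fun i j => fderiv ℝ (fderiv ℝ G) u (EuclideanSpace.single i 1) (EuclideanSpace.single j 1)

/-- `σ_j` of the eigenvalues of `D²G(u)` (via characteristic polynomial coefficients). -/
def sigmaElem (n : ℕ) (j : ℕ) (G : V n → ℝ) (u : V n) : ℝ :=
  (-1 : ℝ) ^ j * ((hessM n G u).charpoly.coeff (n + 1 - j))

/-- `τ[g] ≥ 0` : the Hessian of the extension is positive semidefinite on `S^n_θ`. -/
def TauNonneg (n : ℕ) (θ : ℝ) (G : V n → ℝ) : Prop :=
  ∀ u ∈ sphCap n θ, ∀ v : V n, 0 ≤ hessQ n G u v v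

/-- `τ[g] > 0`. -/
def TauPos (n : ℕ) (θ : ℝ) (G : V n → ℝ) : Prop :=
  TauNonneg n θ G ∧
  ∀ u ∈ sphCap n θ, ∀ v : V n, v ≠ 0 → ⟪v, u⟫ = 0 → 0 < hessQ n G u v v

/-- Capillary (Robin) boundary condition: `∂_{n+1}G = 0` on `∂S^n_θ`. -/
def IsCapillaryF (n : ℕ) (θ : ℝ) (G : V n → ℝ) : Prop :=
  ∀ u ∈ sphCapBdry n θ, fderiv ℝ G u (Etop n) = 0

/-- Reflection negating the horizontal coordinates. -/
def horizNeg (n : ℕ) (ζ : V n) : V n := (2 * ζ (Fin.last n)) • Etop n - ζ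

/-- Support function of a set. -/
def suppFn (n : ℕ) (K : Set (V n)) (u : V n) : ℝ := sSup ((fun y => ⟪u, y⟫) '' K)

/-- Relative interior (within the hyperplane `{x_{n+1}=0}`) of the base `K ∩ {x_{n+1}=0}`. -/
def relintBase (n : ℕ) (K : Set (V n)) : Set (V n) :=
  {x | x (Fin.last n) = 0 ∧ ∃ ε > 0, ∀ y : V n, y (Fin.last n) = 0 → ‖y - x‖ < ε → y ∈ K}

/-- A `θ`-capillary convex body. -/
def IsCapBody (n : ℕ) (θ : ℝ) (K : Set (V n)) : Prop :=
  IsCompact K ∧ Convex ℝ K ∧ (interior K).Nonempty ∧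
  (∀ x ∈ K, 0 ≤ x (Fin.last n)) ∧
  (∀ x ∈ K, 0 < x (Fin.last n) → ∀ u : V n, ‖u‖ = 1 → ⟪u, x⟫ = suppFn n K u →
    Real.cos θ ≤ u (Fin.last n)) ∧
  (∀ v : V n, ‖v‖ = 1 → v (Fin.last n) = 0 →
    suppFn n K (Real.sin θ • v + Real.cos θ • Etop n) = Real.sin θ * suppFn n K v) ∧
  (relintBase n K).Nonempty

/-- `ψ` is one of `x²`, `x^p (p<0)`, `-log x`. -/
def PsiOK (ψ : ℝ → ℝ) : Prop :=
  (ψ = fun x : ℝ => x ^ 2) ∨ (∃ p : ℝ, p < 0 ∧ ψ = fun x : ℝ => x ^ p) ∨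
    (ψ = fun x : ℝ => -Real.log x)

/-- The elementary symmetric function of degree `k` of the values `a i`, `i ∈ S`. -/
def esym {ι : Type*} [DecidableEq ι] (S : Finset ι) (k : ℕ) (a : ι → ℝ) : ℝ :=
  ∑ T ∈ S.powersetCard k, ∏ i ∈ T, a i

section Esym

variable {ι : Type*} [DecidableEq ι]

lemma esym_zero (S : Finset ι) (a : ι → ℝ) : esym S 0 a = 1 := by
  simp [esym]

lemma esym_one (S : Finset ι) (a : ι → ℝ) : esym S 1 a = ∑ i ∈ S, a i := by
  simp [esym, Finset.powersetCard_one]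

lemma esym_smul (S : Finset ι) (k : ℕ) (c : ℝ) (a : ι → ℝ) :
    esym S k (c • a) = c ^ k * esym S k a := by
  unfold esym
  rw [Finset.mul_sum]
  refine Finset.sum_congr rfl fun T hT => ?_
  simp [Finset.prod_mul_distrib, (Finset.mem_powersetCard.1 hT).2]

lemma esym_pos {S : Finset ι} {k : ℕ} {a : ι → ℝ} (hk : k ≤ S.card)
    (ha : ∀ i ∈ S, 0 < a i) : 0 < esym S k a :=
  Finset.sum_pos
    (fun T hT => Finset.prod_pos fun i hi => ha i ((Finset.mem_powersetCard.1 hT).1 hi))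
    (Finset.powersetCard_nonempty.2 hk)

lemma esym_succ_erase {S : Finset ι} {i : ι} (hi : i ∈ S) (k : ℕ) (a : ι → ℝ) :
    esym S (k + 1) a = esym (S.erase i) (k + 1) a + a i * esym (S.erase i) k a := by
  have hS : S = insert i (S.erase i) := (Finset.insert_erase hi).symm
  have hni : i ∉ S.erase i := Finset.notMem_erase i S
  conv_lhs => rw [hS]
  unfold esym
  rw [Finset.powersetCard_succ_insert hni, Finset.sum_union, Finset.sum_image, Finset.mul_sum]
  · congr 1
    refine Finset.sum_congr rfl fun T hT => ?_
    exact Finset.prod_insert fun h => hni ((Finset.mem_powersetCard.1 hT).1 h)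
  · intro T hT T' hT' h
    have h1 : i ∉ T := fun h => hni ((Finset.mem_powersetCard.1 hT).1 h)
    have h2 : i ∉ T' := fun h => hni ((Finset.mem_powersetCard.1 hT').1 h)
    simpa [Finset.erase_insert h1, Finset.erase_insert h2] using congrArg (Finset.erase · i) h
  · rw [Finset.disjoint_left]
    intro T hT hT'
    obtain ⟨T', -, rfl⟩ := Finset.mem_image.1 hT'
    exact hni ((Finset.mem_powersetCard.1 hT).1 (Finset.mem_insert_self i T'))

lemma sum_mul_esym_erase (S : Finset ι) (k : ℕ) (a : ι → ℝ) :
    ∑ i ∈ S, a i * esym (S.erase i) k a = (k + 1) * esym S (k + 1) a := by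
  have h : ∀ T ∈ S.powersetCard (k + 1), ∑ i ∈ T, ∏ j ∈ T, a j = (k + 1) * ∏ j ∈ T, a j := by
    intro T hT
    simp [(Finset.mem_powersetCard.1 hT).2]
  unfold esym
  rw [Finset.mul_sum, ← Finset.sum_congr rfl h]
  simp_rw [Finset.mul_sum]
  rw [Finset.sum_sigma', Finset.sum_sigma']
  refine Finset.sum_bij' (fun p _ => ⟨insert p.1 p.2, p.1⟩) (fun p _ => ⟨p.2, p.1.erase p.2⟩)
    ?_ ?_ ?_ ?_ ?_
  · rintro ⟨i, T⟩ hp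
    simp only [Finset.mem_sigma, Finset.mem_powersetCard] at hp ⊢
    obtain ⟨hi, hT, hc⟩ := hp
    have : i ∉ T := fun h => Finset.notMem_erase i S (hT h)
    refine ⟨⟨Finset.insert_subset hi (hT.trans (Finset.erase_subset _ _)), ?_⟩,
      Finset.mem_insert_self _ _⟩
    rw [Finset.card_insert_of_notMem this, hc]
  · rintro ⟨T, i⟩ hp
    simp only [Finset.mem_sigma, Finset.mem_powersetCard] at hp ⊢
    obtain ⟨⟨hT, hc⟩, hi⟩ := hp
    refine ⟨hT hi, Finset.erase_subset_erase _ hT, ?_⟩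
    rw [Finset.card_erase_of_mem hi, hc]; rfl
  · rintro ⟨i, T⟩ hp
    simp only [Finset.mem_sigma, Finset.mem_powersetCard] at hp
    have : i ∉ T := fun h => Finset.notMem_erase i S (hp.2.1 h)
    simp [Finset.erase_insert this]
  · rintro ⟨T, i⟩ hp
    simp only [Finset.mem_sigma, Finset.mem_powersetCard] at hp
    simp [Finset.insert_erase hp.2]
  · rintro ⟨i, T⟩ hp
    simp only [Finset.mem_sigma, Finset.mem_powersetCard] at hp
    have : i ∉ T := fun h => Finset.notMem_erase i S (hp.2.1 h)
    simp [Finset.prod_insert this]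

lemma parallel_sum_superadd {x y x' y' : ℝ} (hx : 0 < x) (hy : 0 < y) (hx' : 0 < x')
    (hy' : 0 < y') :
    x * y / (y + x) + x' * y' / (y' + x') ≤ (x + x') * (y + y') / ((y + y') + (x + x')) := by
  rw [div_add_div _ _ (by positivity) (by positivity), div_le_div_iff₀ (by positivity)
    (by positivity)]
  have : 0 ≤ (x * y' - x' * y) ^ 2 := sq_nonneg _
  nlinarith

lemma parallel_sum_mono {x y z : ℝ} (hx : 0 < x) (hy : 0 < y) (hyz : y ≤ z) :
    x * y / (y + x) ≤ x * z / (z + x) := by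
  rw [div_le_div_iff₀ (by linarith) (by linarith)]
  nlinarith [mul_le_mul_of_nonneg_left hyz (mul_pos hx hx).le]

lemma succ_mul_esym_div {S : Finset ι} {k : ℕ} {a : ι → ℝ} (hk : k + 2 ≤ S.card)
    (ha : ∀ i ∈ S, 0 < a i) :
    (k + 2) * (esym S (k + 2) a / esym S (k + 1) a) =
      ∑ i ∈ S, a i * (esym (S.erase i) (k + 1) a / esym (S.erase i) k a) /
        (esym (S.erase i) (k + 1) a / esym (S.erase i) k a + a i) := by
  have h := sum_mul_esym_erase S (k + 1) a
  rw [mul_div_assoc', show ((k : ℝ) + 2) = ((k + 1 : ℕ) : ℝ) + 1 by push_cast; ring, ← h,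
    Finset.sum_div]
  refine Finset.sum_congr rfl fun i hi => ?_
  have hc := Finset.card_erase_of_mem hi
  have ha' : ∀ j ∈ S.erase i, 0 < a j := fun j hj => ha j (Finset.mem_of_mem_erase hj)
  have h1 : 0 < esym (S.erase i) k a := esym_pos (by omega) ha'
  have h2 : 0 < esym (S.erase i) (k + 1) a := esym_pos (by omega) ha'
  have h3 := ha i hi
  rw [esym_succ_erase hi k a]
  field_simp

/-- The Marcus–Lopes inequality: the quotients of consecutive elementary symmetric functions are
superadditive on the positive orthant. -/
lemma esym_div_superadd {k : ℕ} {S : Finset ι} {a b : ι → ℝ} (hk : k + 1 ≤ S.card)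
    (ha : ∀ i ∈ S, 0 < a i) (hb : ∀ i ∈ S, 0 < b i) :
    esym S (k + 1) a / esym S k a + esym S (k + 1) b / esym S k b ≤
      esym S (k + 1) (a + b) / esym S k (a + b) := by
  induction k generalizing S with
  | zero => simp [esym_zero, esym_one, Finset.sum_add_distrib]
  | succ k ih =>
    have hab : ∀ i ∈ S, 0 < (a + b) i := fun i hi => add_pos (ha i hi) (hb i hi)
    have hk2 : (0 : ℝ) < k + 2 := by positivity
    rw [← mul_le_mul_iff_right₀ hk2, mul_add]
    erw [succ_mul_esym_div hk ha, succ_mul_esym_div hk hb, succ_mul_esym_div hk hab]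
    rw [← Finset.sum_add_distrib]
    refine Finset.sum_le_sum fun i hi => ?_
    have hc := Finset.card_erase_of_mem hi
    have pos : ∀ c : ι → ℝ, (∀ i ∈ S, 0 < c i) →
        0 < esym (S.erase i) (k + 1) c / esym (S.erase i) k c := fun c hc' =>
      div_pos (esym_pos (by omega) fun j hj => hc' j (Finset.mem_of_mem_erase hj))
        (esym_pos (by omega) fun j hj => hc' j (Finset.mem_of_mem_erase hj))
    refine (parallel_sum_superadd (ha i hi) (pos a ha) (hb i hi) (pos b hb)).trans ?_
    exact parallel_sum_mono (hab i hi) (add_pos (pos a ha) (pos b hb))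
      (ih (by omega) (fun j hj => ha j (Finset.mem_of_mem_erase hj))
        (fun j hj => hb j (Finset.mem_of_mem_erase hj)))

lemma esym_mul_esym_le {j k : ℕ} (hjk : j ≤ k) {S : Finset ι} {a b : ι → ℝ} (hk : k ≤ S.card)
    (hp : ∀ i ∈ S, 0 < (a + b) i) (hm : ∀ i ∈ S, 0 < (a - b) i) :
    esym S k (a + b) * esym S k (a - b) * esym S j a ^ 2 ≤
      esym S j (a + b) * esym S j (a - b) * esym S k a ^ 2 := by
  have ha : ∀ i ∈ S, 0 < a i := fun i hi => by
    have h1 := hp i hi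
    have h2 := hm i hi
    simp only [Pi.add_apply, Pi.sub_apply] at h1 h2
    linarith
  induction k, hjk using Nat.le_induction with
  | base => exact le_rfl
  | succ k hjk ih =>
    have ih := ih (by omega)
    have hs := esym_div_superadd hk hp hm
    have h2a : a + b + (a - b) = (2 : ℝ) • a := by ext i; simp; ring
    rw [h2a, esym_smul, esym_smul] at hs
    have pa := esym_pos (k := k) (by omega) ha
    have pa' := esym_pos (k := k + 1) (by omega) ha
    have pp := esym_pos (k := k) (by omega) hp
    have pp' := esym_pos (k := k + 1) (by omega) hp
    have pm := esym_pos (k := k) (by omega) hm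
    have pm' := esym_pos (k := k + 1) (by omega) hm
    have qj := esym_pos (k := j) (by omega) ha
    set x := esym S (k + 1) (a + b) / esym S k (a + b) with hx
    set y := esym S (k + 1) (a - b) / esym S k (a - b) with hy
    set z := esym S (k + 1) a / esym S k a with hz
    have ex : esym S (k + 1) (a + b) = x * esym S k (a + b) := by rw [hx]; field_simp
    have ey : esym S (k + 1) (a - b) = y * esym S k (a - b) := by rw [hy]; field_simp
    have ez : esym S (k + 1) a = z * esym S k a := by rw [hz]; field_simp
    have hs' : x + y ≤ 2 * z := by
      refine hs.trans_eq ?_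
      rw [hz, pow_succ]
      field_simp
    have px : 0 < x := div_pos pp' pp
    have py : 0 < y := div_pos pm' pm
    have hxy : x * y ≤ z ^ 2 := by nlinarith [sq_nonneg (x - y)]
    rw [ex, ey, ez]
    calc x * esym S k (a + b) * (y * esym S k (a - b)) * esym S j a ^ 2
        = (x * y) * (esym S k (a + b) * esym S k (a - b) * esym S j a ^ 2) := by ring
      _ ≤ z ^ 2 * (esym S j (a + b) * esym S j (a - b) * esym S k a ^ 2) :=
          mul_le_mul hxy ih (by positivity) (by positivity)
      _ = _ := by ring

end Esym

section Jets

variable {ι : Type*} [DecidableEq ι] [Fintype ι]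

/-- The sum of `μ S * ∏ i ∈ U, a i` over disjoint pairs `(S, U)` with `|S| = j`, `|U| = l`. -/
def mixedEsym (μ : Finset ι → ℝ) (j l : ℕ) (a : ι → ℝ) : ℝ :=
  ∑ S ∈ Finset.univ.powersetCard j, μ S * esym Sᶜ l a

lemma esym_add_smul (k : ℕ) (a b : ι → ℝ) (t : ℝ) :
    esym Finset.univ k (a + t • b) =
      ∑ j ∈ Finset.range (k + 1), mixedEsym (fun S => ∏ i ∈ S, b i) j (k - j) a * t ^ j := by
  have h1 : ∀ T ∈ (Finset.univ : Finset ι).powersetCard k, ∏ i ∈ T, (a + t • b) i =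
      ∑ j ∈ Finset.range (k + 1), ∑ S ∈ T.powersetCard j,
        (∏ i ∈ S, b i) * (∏ i ∈ T \ S, a i) * t ^ j := by
    intro T hT
    have hc := (Finset.mem_powersetCard.1 hT).2
    have : ∏ i ∈ T, (a + t • b) i = ∏ i ∈ T, (t * b i + a i) :=
      Finset.prod_congr rfl fun i _ => by simp [add_comm]
    rw [this, Finset.prod_add, Finset.sum_powerset, hc]
    refine Finset.sum_congr rfl fun j _ => Finset.sum_congr rfl fun S hS => ?_
    rw [Finset.prod_mul_distrib, Finset.prod_const, (Finset.mem_powersetCard.1 hS).2]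
    ring
  unfold esym
  rw [Finset.sum_congr rfl h1, Finset.sum_comm]
  refine Finset.sum_congr rfl fun j hj => ?_
  have hjk : j ≤ k := by simpa [Nat.lt_succ_iff] using hj
  unfold mixedEsym esym
  rw [Finset.sum_mul]
  simp_rw [Finset.mul_sum, Finset.sum_mul]
  rw [Finset.sum_sigma', Finset.sum_sigma']
  refine Finset.sum_bij' (fun p _ => ⟨p.2, p.1 \ p.2⟩) (fun p _ => ⟨p.1 ∪ p.2, p.1⟩)
    ?_ ?_ ?_ ?_ ?_
  · rintro ⟨T, S⟩ hp
    simp only [Finset.mem_sigma, Finset.mem_powersetCard, Finset.subset_univ, true_and] at hp ⊢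
    obtain ⟨hT, hS, hc⟩ := hp
    refine ⟨hc, fun i hi => ?_, ?_⟩
    · simpa using (Finset.mem_sdiff.1 hi).2
    · rw [Finset.card_sdiff_of_subset hS, hT, hc]
  · rintro ⟨S, U⟩ hp
    simp only [Finset.mem_sigma, Finset.mem_powersetCard, Finset.subset_univ, true_and] at hp ⊢
    obtain ⟨hS, hU, hc⟩ := hp
    have hd : Disjoint S U := by
      rw [Finset.disjoint_right]
      exact fun i hi => by simpa using hU hi
    refine ⟨?_, Finset.subset_union_left, hS⟩
    rw [Finset.card_union_of_disjoint hd]; omega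
  · rintro ⟨T, S⟩ hp
    simp only [Finset.mem_sigma, Finset.mem_powersetCard] at hp
    simp [Finset.union_sdiff_of_subset hp.2.1]
  · rintro ⟨S, U⟩ hp
    simp only [Finset.mem_sigma, Finset.mem_powersetCard] at hp
    have hd : Disjoint S U := by
      rw [Finset.disjoint_right]
      exact fun i hi => by simpa using hp.2.1 hi
    simp [Finset.union_sdiff_cancel_left hd]
  · rintro ⟨T, S⟩ hp
    rfl

lemma coeff_two_nonneg {r : Polynomial ℝ} (h0 : r.coeff 0 = 0) (h1 : r.coeff 1 = 0)
    (h : ∀ᶠ t in nhds (0 : ℝ), 0 ≤ r.eval t) : 0 ≤ r.coeff 2 := by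
  obtain ⟨q, hq⟩ : Polynomial.X ^ 2 ∣ r := by
    rw [Polynomial.X_pow_dvd_iff]
    intro d hd
    interval_cases d <;> assumption
  have hc : r.coeff 2 = q.eval 0 := by
    rw [hq, ← Polynomial.coeff_zero_eq_eval_zero]
    simpa using Polynomial.coeff_X_pow_mul q 2 0
  rw [hc]
  refine ge_of_tendsto (x := nhdsWithin 0 {0}ᶜ) (f := fun t => q.eval t)
    (q.continuous.continuousAt.mono_left nhdsWithin_le_nhds) ?_
  filter_upwards [h.filter_mono nhdsWithin_le_nhds, self_mem_nhdsWithin] with t ht ht0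
  rw [hq] at ht
  simp only [Polynomial.eval_mul, Polynomial.eval_pow, Polynomial.eval_X] at ht
  exact nonneg_of_mul_nonneg_right ht (by positivity [show t ≠ 0 from ht0])

lemma coeff_two_le {p q : Polynomial ℝ} (h : ∀ᶠ t in nhds (0 : ℝ),
      p.eval t * p.eval (-t) * q.eval 0 ^ 2 ≤ q.eval t * q.eval (-t) * p.eval 0 ^ 2) :
    (2 * p.coeff 0 * p.coeff 2 - p.coeff 1 ^ 2) * q.coeff 0 ^ 2 ≤
      (2 * q.coeff 0 * q.coeff 2 - q.coeff 1 ^ 2) * p.coeff 0 ^ 2 := by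
  have key : ∀ p : Polynomial ℝ, (p * p.comp (-Polynomial.X)).coeff 0 = p.coeff 0 ^ 2 ∧
      (p * p.comp (-Polynomial.X)).coeff 1 = 0 ∧
      (p * p.comp (-Polynomial.X)).coeff 2 = 2 * p.coeff 0 * p.coeff 2 - p.coeff 1 ^ 2 := by
    intro p
    have hX : (-Polynomial.X : Polynomial ℝ) = Polynomial.C (-1) * Polynomial.X := by simp
    rw [hX]
    refine ⟨?_, ?_, ?_⟩ <;>
      simp only [Polynomial.coeff_mul, Finset.Nat.antidiagonal_succ, Finset.Nat.antidiagonal_zero,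
        Polynomial.comp_C_mul_X_coeff] <;> simp <;> ring
  obtain ⟨p0, p1, p2⟩ := key p
  obtain ⟨q0, q1, q2⟩ := key q
  have := coeff_two_nonneg (r := (q * q.comp (-Polynomial.X)) * Polynomial.C (p.coeff 0 ^ 2) -
    (p * p.comp (-Polynomial.X)) * Polynomial.C (q.coeff 0 ^ 2)) ?_ ?_ ?_
  · rw [Polynomial.coeff_sub, Polynomial.coeff_mul_C, Polynomial.coeff_mul_C, p2, q2] at this
    linarith
  · rw [Polynomial.coeff_sub, Polynomial.coeff_mul_C, Polynomial.coeff_mul_C, p0, q0]; ring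
  · rw [Polynomial.coeff_sub, Polynomial.coeff_mul_C, Polynomial.coeff_mul_C, p1, q1]; ring
  · filter_upwards [h] with t ht
    simp only [Polynomial.coeff_zero_eq_eval_zero, Polynomial.eval_sub, Polynomial.eval_mul,
      Polynomial.eval_comp, Polynomial.eval_neg, Polynomial.eval_X, Polynomial.eval_C]
    linarith

/-- If the first variation of the `k`-th elementary symmetric function at a positive vector
vanishes in direction `b`, then the second variation is nonpositive, and negative unless
`b = 0`. -/
lemma mixedEsym_two_nonpos {k : ℕ} (hk : 2 ≤ k) (hkn : k ≤ Fintype.card ι) {a b : ι → ℝ}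
    (ha : ∀ i, 0 < a i) (h1 : mixedEsym (fun S => ∏ i ∈ S, b i) 1 (k - 1) a = 0) :
    mixedEsym (fun S => ∏ i ∈ S, b i) 2 (k - 2) a ≤ 0 ∧
      (mixedEsym (fun S => ∏ i ∈ S, b i) 2 (k - 2) a = 0 → b = 0) := by
  let p : Polynomial ℝ := ∑ j ∈ Finset.range (k + 1),
    Polynomial.C (mixedEsym (fun S => ∏ i ∈ S, b i) j (k - j) a) * Polynomial.X ^ j
  have pc : ∀ j ≤ k, p.coeff j = mixedEsym (fun S => ∏ i ∈ S, b i) j (k - j) a := by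
    intro j hj
    simp only [p, Polynomial.finsetSum_coeff, Polynomial.coeff_C_mul_X_pow]
    rw [Finset.sum_ite_eq]
    simp [hj]
  have pe : ∀ t, p.eval t = esym Finset.univ k (a + t • b) := by
    intro t
    rw [esym_add_smul]
    simp [p, Polynomial.eval_finsetSum]
  have hcard : (Finset.univ : Finset ι).card = Fintype.card ι := rfl
  have hc0 : p.coeff 0 = esym Finset.univ k a := by
    rw [Polynomial.coeff_zero_eq_eval_zero, pe]; simp
  have c0pos : 0 < p.coeff 0 := by
    rw [hc0]; exact esym_pos (by omega) fun i _ => ha i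
  have c1 : p.coeff 1 = 0 := by rw [pc 1 (by omega), h1]
  rw [← pc 2 hk]
  have hev : ∀ᶠ t in nhds (0 : ℝ), ∀ i, 0 < (a + t • b) i ∧ 0 < (a - t • b) i := by
    rw [Filter.eventually_all]
    intro i
    have e1 : Filter.Tendsto (fun t : ℝ => (a + t • b) i) (nhds 0) (nhds (a i)) := by
      have : Continuous fun t : ℝ => (a + t • b) i := by
        simp only [Pi.add_apply, Pi.smul_apply, smul_eq_mul]; fun_prop
      simpa using this.tendsto 0
    have e2 : Filter.Tendsto (fun t : ℝ => (a - t • b) i) (nhds 0) (nhds (a i)) := by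
      have : Continuous fun t : ℝ => (a - t • b) i := by
        simp only [Pi.sub_apply, Pi.smul_apply, smul_eq_mul]; fun_prop
      simpa using this.tendsto 0
    exact (e1.eventually (lt_mem_nhds (ha i))).and (e2.eventually (lt_mem_nhds (ha i)))
  have cmp : ∀ j ≤ k, ∀ q : Polynomial ℝ, (∀ t, q.eval t = esym Finset.univ j (a + t • b)) →
      (2 * p.coeff 0 * p.coeff 2 - p.coeff 1 ^ 2) * q.coeff 0 ^ 2 ≤
      (2 * q.coeff 0 * q.coeff 2 - q.coeff 1 ^ 2) * p.coeff 0 ^ 2 := by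
    intro j hj q qe
    refine coeff_two_le ?_
    filter_upwards [hev] with t ht
    rw [pe, pe, pe, qe, qe, qe]
    simpa [← sub_eq_add_neg] using esym_mul_esym_le hj (by omega)
      (fun i (_ : i ∈ Finset.univ) => (ht i).1) fun i _ => (ht i).2
  set σ := ∑ i, a i with hσ
  set β := ∑ i, b i with hβ
  have hσpos : 0 < σ := by
    have : Nonempty ι := Fintype.card_pos_iff.1 (by omega)
    exact Finset.sum_pos (fun i _ => ha i) Finset.univ_nonempty
  have q1 := cmp 1 (by omega) (Polynomial.C σ + Polynomial.C β * Polynomial.X) (by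
    intro t
    simp only [esym_one, Pi.add_apply, Pi.smul_apply, smul_eq_mul, Finset.sum_add_distrib,
      ← Finset.mul_sum, ← hσ, ← hβ, Polynomial.eval_add, Polynomial.eval_mul,
      Polynomial.eval_C, Polynomial.eval_X]
    ring)
  have e2 : ∀ x : ι → ℝ, esym Finset.univ 2 x = ((∑ i, x i) ^ 2 - ∑ i, x i ^ 2) / 2 := by
    intro x
    have h := sum_mul_esym_erase Finset.univ 1 x
    simp only [esym_one] at h
    have : ∀ i, ∑ j ∈ Finset.univ.erase i, x j = (∑ j, x j) - x i := fun i => by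
      rw [← Finset.add_sum_erase _ _ (Finset.mem_univ i)]; ring
    simp only [this, mul_sub, Finset.sum_sub_distrib, ← Finset.sum_mul] at h
    norm_num at h
    simp only [← pow_two] at h
    linarith
  set A := ∑ i, a i ^ 2 with hA
  set N := ∑ i, b i ^ 2 with hN
  set m := ∑ i, a i * b i with hm
  have q2 := cmp 2 hk (Polynomial.C ((σ ^ 2 - A) / 2) + Polynomial.C (σ * β - m) * Polynomial.X +
      Polynomial.C ((β ^ 2 - N) / 2) * Polynomial.X ^ 2) (by
    intro t
    rw [e2]
    have s1 : ∑ i, (a + t • b) i = σ + t * β := by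
      simp only [Pi.add_apply, Pi.smul_apply, smul_eq_mul, Finset.sum_add_distrib,
        ← Finset.mul_sum, hσ, hβ]
    have s2 : ∑ i, (a + t • b) i ^ 2 = A + 2 * t * m + t ^ 2 * N := by
      simp only [Pi.add_apply, Pi.smul_apply, smul_eq_mul, hA, hm, hN, Finset.mul_sum,
        ← Finset.sum_add_distrib]
      exact Finset.sum_congr rfl fun i _ => by ring
    rw [s1, s2]
    simp
    ring)
  have hE2 : 0 < (σ ^ 2 - A) / 2 := by
    rw [← e2]
    exact esym_pos (by omega) fun i _ => ha i
  have hN0 : 0 ≤ N := Finset.sum_nonneg fun i _ => sq_nonneg _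
  simp [Polynomial.coeff_X, Polynomial.coeff_C, c1] at q1 q2
  generalize p.coeff 0 = c0 at *
  generalize p.coeff 2 = c2 at *
  have hle : c2 ≤ 0 := by
    by_contra hpos
    push Not at hpos
    have : 0 < 2 * c0 * c2 * σ ^ 2 := by positivity
    nlinarith [mul_nonneg (sq_nonneg β) (sq_nonneg c0)]
  refine ⟨hle, fun h0 => ?_⟩
  have hβ0 : β = 0 := by
    rw [h0] at q1
    have : 0 < c0 ^ 2 := by positivity
    have : β ^ 2 ≤ 0 := by nlinarith
    nlinarith
  rw [h0, hβ0] at q2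
  have hc : 0 < c0 ^ 2 := by positivity
  have hNz : N = 0 := by
    by_contra hne
    have hNp : 0 < N := lt_of_le_of_ne hN0 (Ne.symm hne)
    have : 2 * ((σ ^ 2 - A) / 2) * ((0 ^ 2 - N) / 2) - (σ * 0 - m) ^ 2 < 0 := by
      nlinarith [sq_nonneg m, mul_pos hE2 hNp]
    nlinarith
  funext i
  have := (Finset.sum_eq_zero_iff_of_nonneg fun i _ => sq_nonneg (b i)).1 hNz i
    (Finset.mem_univ i)
  simpa using this

end Jets

section Pencil

/-- Jacobi's formula for the derivative of a determinant. -/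
lemma derivation_det {R S ι : Type*} [CommRing R] [CommRing S] [Algebra R S] [Fintype ι]
    [DecidableEq ι] (D : Derivation R S S) (M : Matrix ι ι S) :
    D M.det = (M.adjugate * M.map D).trace := by
  have hprod : ∀ (s : Finset ι) (f : ι → S),
      D (∏ i ∈ s, f i) = ∑ i ∈ s, (∏ j ∈ s.erase i, f j) * D (f i) := by
    intro s f
    induction s using Finset.induction_on with
    | empty => simp
    | insert a s ha ih =>
      rw [Finset.prod_insert ha, D.leibniz, ih, Finset.sum_insert ha, Finset.erase_insert ha,
        smul_eq_mul, smul_eq_mul, Finset.mul_sum, add_comm]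
      congr 1
      refine Finset.sum_congr rfl fun i hi => ?_
      have hia : i ≠ a := fun h => ha (h ▸ hi)
      rw [Finset.erase_insert_of_ne hia.symm, Finset.prod_insert (by simp [ha])]
      ring
  have h1 : ∀ i, (M.adjugate * M.map D) i i = (M.updateCol i fun j => D (M j i)).det := by
    intro i
    rw [← Matrix.cramer_apply, Matrix.cramer_eq_adjugate_mulVec]
    rfl
  rw [Matrix.trace, Finset.sum_congr rfl fun i _ => (by rw [Matrix.diag_apply, h1])]
  simp_rw [Matrix.det_apply]
  rw [map_sum, Finset.sum_comm]
  refine Finset.sum_congr rfl fun σ _ => ?_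
  rw [Units.smul_def, map_zsmul, hprod, ← Finset.smul_sum]
  congr 1
  refine Finset.sum_congr rfl fun i _ => ?_
  rw [← Finset.mul_prod_erase _ _ (Finset.mem_univ i), mul_comm]
  congr 1
  · simp
  · refine Finset.prod_congr rfl fun j hj => ?_
    rw [Matrix.updateCol_ne (Finset.ne_of_mem_erase hj)]

variable {n : ℕ} {R : Type*} [CommRing R]

/-- The determinant `det (X₀ A₀ + X₁ A₁ + X₂ A₂)`. -/
def pencil (A : Fin 3 → Matrix (Fin n) (Fin n) R) : MvPolynomial (Fin 3) R :=
  (∑ i, (MvPolynomial.X i : MvPolynomial (Fin 3) R) • (A i).map MvPolynomial.C).det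

lemma eval_pencil (A : Fin 3 → Matrix (Fin n) (Fin n) R) (v : Fin 3 → R) :
    MvPolynomial.eval v (pencil A) = (∑ i, v i • A i).det := by
  rw [pencil, RingHom.map_det]
  congr 1
  ext p q
  simp [Matrix.sum_apply]

lemma eval_pderiv_pencil (A : Fin 3 → Matrix (Fin n) (Fin n) R) (v : Fin 3 → R) (i : Fin 3) :
    MvPolynomial.eval v (MvPolynomial.pderiv i (pencil A)) =
      ((∑ j, v j • A j).adjugate * A i).trace := by
  set M := ∑ i, (MvPolynomial.X i : MvPolynomial (Fin 3) R) •
    (A i).map (MvPolynomial.C (σ := Fin 3)) with hM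
  have h1 : (MvPolynomial.eval v).mapMatrix M = ∑ j, v j • A j := by
    ext p q
    simp [hM, Matrix.sum_apply]
  have h2 : M.map (MvPolynomial.pderiv i) = (A i).map (MvPolynomial.C (σ := Fin 3)) := by
    ext p q : 2
    simp [hM, Matrix.sum_apply, MvPolynomial.pderiv_X, Pi.single_apply]
  rw [pencil, derivation_det, ← hM, h2, Matrix.trace, Matrix.trace, map_sum, ← h1,
    ← RingHom.map_adjugate]
  refine Finset.sum_congr rfl fun p _ => ?_
  simp [Matrix.mul_apply]

lemma map_pencil {S : Type*} [CommRing S] (f : R →+* S)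
    (A : Fin 3 → Matrix (Fin n) (Fin n) R) :
    MvPolynomial.map f (pencil A) = pencil fun i => (A i).map f := by
  rw [pencil, pencil, RingHom.map_det]
  congr 1
  ext p q
  simp [Matrix.sum_apply]

lemma pencil_conj (A : Fin 3 → Matrix (Fin n) (Fin n) R) (T : Matrix (Fin n) (Fin n) R) :
    pencil (fun i => T.transpose * A i * T) = MvPolynomial.C (T.det ^ 2) * pencil A := by
  have h : ∑ i, (MvPolynomial.X i : MvPolynomial (Fin 3) R) •
      (T.transpose * A i * T).map ⇑(MvPolynomial.C (σ := Fin 3)) =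
      (T.map (MvPolynomial.C (σ := Fin 3))).transpose *
        (∑ i, (MvPolynomial.X i : MvPolynomial (Fin 3) R) •
          (A i).map (MvPolynomial.C (σ := Fin 3))) *
          T.map (MvPolynomial.C (σ := Fin 3)) := by
    simp_rw [Matrix.mul_sum, Matrix.sum_mul, Matrix.mul_smul, Matrix.smul_mul, Matrix.map_mul,
      Matrix.transpose_map]
  have hT : (T.map (MvPolynomial.C : R →+* MvPolynomial (Fin 3) R)).det =
      MvPolynomial.C T.det := by
    rw [RingHom.map_det]; rfl
  rw [pencil, h, Matrix.det_mul, Matrix.det_mul, Matrix.det_transpose, hT, pencil, map_pow]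
  ring

/-- The exponent `X₀ ^ a * X₁ ^ b * X₂ ^ c`. -/
def expo (a b c : ℕ) : Fin 3 →₀ ℕ := Finsupp.equivFunOnFinite.symm ![a, b, c]

lemma expo_inj {a b c a' b' c' : ℕ} : expo a b c = expo a' b' c' ↔ a = a' ∧ b = b' ∧ c = c' := by
  rw [expo, expo, Equiv.apply_eq_iff_eq]
  simp [Matrix.vecCons_inj]

lemma monomial_expo (a b c : ℕ) (r : R) : MvPolynomial.monomial (expo a b c) r =
    MvPolynomial.C r * (MvPolynomial.X 0 ^ a * MvPolynomial.X 1 ^ b * MvPolynomial.X 2 ^ c) := by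
  rw [MvPolynomial.monomial_eq, Finsupp.prod_fintype _ _ (by simp)]
  simp [Fin.prod_univ_three, expo]

/-- The matrix whose rows indexed by `S` come from `A`, the others from `B`. -/
def pieceRows (S : Finset (Fin n)) (A B : Matrix (Fin n) (Fin n) R) : Matrix (Fin n) (Fin n) R :=
  Matrix.of fun i j => if i ∈ S then A i j else B i j

lemma det_add_eq_sum (A B : Matrix (Fin n) (Fin n) R) :
    (A + B).det = ∑ S : Finset (Fin n), (pieceRows S A B).det := by
  refine (Matrix.detRowAlternating.toMultilinearMap.map_add_univ A B).trans ?_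
  refine Finset.sum_congr rfl fun S _ => congrArg Matrix.det ?_
  ext i j
  by_cases hi : i ∈ S <;> simp [pieceRows, hi, Finset.piecewise]

/-- The principal minor of `B` with index set `S`. -/
def principalMinor (B : Matrix (Fin n) (Fin n) R) (S : Finset (Fin n)) : R :=
  (pieceRows S B 1).det

lemma pencil_one_diagonal (a : Fin n → R) (B : Matrix (Fin n) (Fin n) R) :
    pencil ![1, Matrix.diagonal a, B] = ∑ S : Finset (Fin n), ∑ U ∈ Sᶜ.powerset,
      MvPolynomial.monomial (expo (n - S.card - U.card) U.card S.card)
        (principalMinor B S * ∏ i ∈ U, a i) := by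
  set d : Fin n → MvPolynomial (Fin 3) R := fun i =>
    MvPolynomial.X 1 * MvPolynomial.C (a i) + MvPolynomial.X 0 with hd
  have h0 : ∑ i, (MvPolynomial.X i : MvPolynomial (Fin 3) R) •
      ((![1, Matrix.diagonal a, B] : Fin 3 → Matrix (Fin n) (Fin n) R) i).map MvPolynomial.C =
      (MvPolynomial.X 2 : MvPolynomial (Fin 3) R) • B.map MvPolynomial.C + Matrix.diagonal d := by
    rw [Fin.sum_univ_three]
    change (MvPolynomial.X 0 : MvPolynomial (Fin 3) R) •
      (1 : Matrix (Fin n) (Fin n) R).map MvPolynomial.C +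
      (MvPolynomial.X 1 : MvPolynomial (Fin 3) R) • (Matrix.diagonal a).map MvPolynomial.C +
      (MvPolynomial.X 2 : MvPolynomial (Fin 3) R) • B.map MvPolynomial.C = _
    rw [Matrix.map_one _ (map_zero _) (map_one _), Matrix.diagonal_map (map_zero _),
      ← Matrix.diagonal_one, ← Matrix.diagonal_smul, ← Matrix.diagonal_smul, Matrix.diagonal_add,
      add_comm]
    congr 2
    ext1 i
    simp only [hd, Pi.smul_apply, smul_eq_mul, mul_one]
    exact add_comm _ _
  rw [pencil, h0, det_add_eq_sum]
  refine Finset.sum_congr rfl fun S _ => ?_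
  have h1 : (pieceRows S ((MvPolynomial.X 2 : MvPolynomial (Fin 3) R) •
      B.map ⇑(MvPolynomial.C (σ := Fin 3))) (Matrix.diagonal d)).det =
      (∏ i, S.piecewise (fun _ => MvPolynomial.X 2) d i) *
        MvPolynomial.C (principalMinor B S) := by
    rw [principalMinor, RingHom.map_det, ← Matrix.det_mul_column]
    congr 1
    ext p q : 2
    by_cases hp : p ∈ S
    · simp [hp, pieceRows]
    · by_cases hpq : p = q
      · subst hpq; simp [hp, pieceRows]
      · simp [hp, pieceRows, Matrix.diagonal_apply_ne _ hpq, Matrix.one_apply_ne hpq]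
  rw [h1, Finset.prod_piecewise]
  simp only [Finset.univ_inter, Finset.prod_const]
  rw [← Finset.compl_eq_univ_sdiff, hd, Finset.prod_add, Finset.mul_sum, Finset.sum_mul]
  refine Finset.sum_congr rfl fun U hU => ?_
  rw [Finset.prod_mul_distrib, Finset.prod_const, Finset.prod_const, monomial_expo,
    Finset.card_sdiff_of_subset (Finset.mem_powerset.1 hU), Finset.card_compl, Fintype.card_fin,
    map_mul, map_prod]
  ring

lemma coeff_pencil_one_diagonal {k j : ℕ} (hj : j ≤ k) (hk : k ≤ n) (a : Fin n → ℝ)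
    (B : Matrix (Fin n) (Fin n) ℝ) :
    (pencil ![1, Matrix.diagonal a, B]).coeff (expo (n - k) (k - j) j) =
      mixedEsym (principalMinor B) j (k - j) a := by
  rw [pencil_one_diagonal, MvPolynomial.coeff_sum, mixedEsym]
  rw [← Finset.sum_subset (Finset.subset_univ (Finset.univ.powersetCard j))]
  · refine Finset.sum_congr rfl fun S hS => ?_
    have hS := (Finset.mem_powersetCard.1 hS).2
    rw [MvPolynomial.coeff_sum, esym, Finset.mul_sum]
    rw [← Finset.sum_subset (s₁ := Sᶜ.powersetCard (k - j))]
    · refine Finset.sum_congr rfl fun U hU => ?_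
      rw [MvPolynomial.coeff_monomial, if_pos]
      rw [expo_inj, hS, (Finset.mem_powersetCard.1 hU).2]
      omega
    · intro U hU
      exact Finset.mem_powerset.2 (Finset.mem_powersetCard.1 hU).1
    · intro U hU hU'
      rw [MvPolynomial.coeff_monomial, if_neg]
      rw [expo_inj]
      rintro ⟨-, h, -⟩
      exact hU' (Finset.mem_powersetCard.2 ⟨Finset.mem_powerset.1 hU, h⟩)
  · intro S _ hS
    rw [MvPolynomial.coeff_sum]
    refine Finset.sum_eq_zero fun U _ => ?_
    rw [MvPolynomial.coeff_monomial, if_neg]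
    rw [expo_inj]
    rintro ⟨-, -, h⟩
    exact hS (Finset.mem_powersetCard.2 ⟨Finset.subset_univ _, h⟩)

lemma principalMinor_singleton (B : Matrix (Fin n) (Fin n) R) (i : Fin n) :
    principalMinor B {i} = B i i := by
  have : pieceRows ({i} : Finset (Fin n)) B (1 : Matrix (Fin n) (Fin n) R) =
      1 + (Matrix.of fun p (_ : Unit) => if p = i then (1 : R) else 0) *
        (Matrix.of fun (_ : Unit) q => B i q - (1 : Matrix (Fin n) (Fin n) R) i q) := by
    ext p q
    by_cases hp : p = i
    · subst hp; simp [Matrix.mul_apply, pieceRows]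
    · simp [Matrix.mul_apply, hp, pieceRows]
  rw [principalMinor, this, Matrix.det_one_add_mul_comm, Matrix.det_unique]
  simp [Matrix.mul_apply]

lemma principalMinor_pair (B : Matrix (Fin n) (Fin n) R) {i j : Fin n} (hij : i ≠ j) :
    principalMinor B {i, j} = B i i * B j j - B i j * B j i := by
  have : pieceRows ({i, j} : Finset (Fin n)) B (1 : Matrix (Fin n) (Fin n) R) =
      1 + (Matrix.of fun p (l : Fin 2) => if p = if l = 0 then i else j then (1 : R) else 0) *
        (Matrix.of fun (l : Fin 2) q => if l = 0 then B i q - (1 : Matrix (Fin n) (Fin n) R) i q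
          else B j q - (1 : Matrix (Fin n) (Fin n) R) j q) := by
    ext p q
    by_cases hp : p = i
    · subst hp; simp [Matrix.mul_apply, Fin.sum_univ_two, hij, pieceRows]
    · by_cases hp' : p = j
      · subst hp'; simp [Matrix.mul_apply, Fin.sum_univ_two, hij.symm, pieceRows]
      · simp [Matrix.mul_apply, Fin.sum_univ_two, hp, hp', pieceRows]
  rw [principalMinor, this, Matrix.det_one_add_mul_comm, Matrix.det_fin_two]
  simp [Matrix.mul_apply, Matrix.one_apply, hij, hij.symm]

end Pencil

section PointwisePencil

variable {n : ℕ}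

/-- A positive definite matrix is congruent to the identity. -/
lemma exists_congr_one {A : Matrix (Fin n) (Fin n) ℝ} (hA : A.PosDef) :
    ∃ T : Matrix (Fin n) (Fin n) ℝ, T.det ≠ 0 ∧ T.transpose * A * T = 1 := by
  set U : Matrix (Fin n) (Fin n) ℝ := hA.1.eigenvectorUnitary.1 with hU
  set d := hA.1.eigenvalues with hd
  have hdpos := hA.eigenvalues_pos
  have h1 : U.transpose * A * U = Matrix.diagonal d := by
    have := hA.1.conjStarAlgAut_star_eigenvectorUnitary
    rw [Unitary.conjStarAlgAut_star_apply] at this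
    exact this
  have hUU : U.transpose * U = 1 := (Unitary.mem_iff.1 hA.1.eigenvectorUnitary.2).1
  have hUdet : U.det ≠ 0 := by
    intro h
    have := congrArg Matrix.det hUU
    simp [h] at this
  refine ⟨U * Matrix.diagonal fun i => (Real.sqrt (d i))⁻¹, ?_, ?_⟩
  · rw [Matrix.det_mul, Matrix.det_diagonal]
    exact mul_ne_zero hUdet (Finset.prod_ne_zero_iff.2 fun i _ =>
      inv_ne_zero (Real.sqrt_ne_zero'.2 (hdpos i)))
  · rw [Matrix.transpose_mul, Matrix.diagonal_transpose]
    calc _ = Matrix.diagonal (fun i => (Real.sqrt (d i))⁻¹) * (U.transpose * A * U) *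
          Matrix.diagonal fun i => (Real.sqrt (d i))⁻¹ := by simp only [Matrix.mul_assoc]
      _ = 1 := by
        rw [h1, Matrix.diagonal_mul_diagonal, Matrix.diagonal_mul_diagonal, ← Matrix.diagonal_one]
        congr 1
        ext i
        have := Real.mul_self_sqrt (hdpos i).le
        have h2 : Real.sqrt (d i) ≠ 0 := Real.sqrt_ne_zero'.2 (hdpos i)
        have h3 : d i = Real.sqrt (d i) * Real.sqrt (d i) := this.symm
        field_simp
        nlinarith

/-- Simultaneous diagonalization of two positive definite forms. -/
lemma exists_simultaneous_diagonal {A₀ A₁ : Matrix (Fin n) (Fin n) ℝ} (h0 : A₀.PosDef)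
    (h1 : A₁.PosDef) : ∃ (T : Matrix (Fin n) (Fin n) ℝ) (a : Fin n → ℝ), T.det ≠ 0 ∧
      (∀ i, 0 < a i) ∧ T.transpose * A₀ * T = 1 ∧ T.transpose * A₁ * T = Matrix.diagonal a := by
  obtain ⟨P, hP, hP0⟩ := exists_congr_one h0
  have hN : (P.transpose * A₁ * P).PosDef := by
    have := h1.conjTranspose_mul_mul_same (B := P)
      (Matrix.mulVec_injective_of_isUnit ((Matrix.isUnit_iff_isUnit_det _).2 hP.isUnit))
    rwa [Matrix.conjTranspose_eq_transpose_of_trivial] at this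
  set U : Matrix (Fin n) (Fin n) ℝ := hN.1.eigenvectorUnitary.1 with hU
  have h2 : U.transpose * (P.transpose * A₁ * P) * U = Matrix.diagonal hN.1.eigenvalues := by
    have := hN.1.conjStarAlgAut_star_eigenvectorUnitary
    rw [Unitary.conjStarAlgAut_star_apply] at this
    exact this
  have hUU : U.transpose * U = 1 := (Unitary.mem_iff.1 hN.1.eigenvectorUnitary.2).1
  have hUdet : U.det ≠ 0 := by
    intro h
    have := congrArg Matrix.det hUU
    simp [h] at this
  refine ⟨P * U, _, by rw [Matrix.det_mul]; exact mul_ne_zero hP hUdet, hN.eigenvalues_pos, ?_, ?_⟩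
  · calc _ = U.transpose * (P.transpose * A₀ * P) * U := by
          simp only [Matrix.transpose_mul, Matrix.mul_assoc]
      _ = 1 := by rw [hP0, Matrix.mul_one, hUU]
  · rw [← h2]
    simp only [Matrix.transpose_mul, Matrix.mul_assoc]

lemma mixedEsym_principalMinor_one (B : Matrix (Fin n) (Fin n) ℝ) (l : ℕ) (a : Fin n → ℝ) :
    mixedEsym (principalMinor B) 1 l a = mixedEsym (fun S => ∏ i ∈ S, B i i) 1 l a := by
  refine Finset.sum_congr rfl fun S hS => ?_
  obtain ⟨i, rfl⟩ := Finset.card_eq_one.1 (Finset.mem_powersetCard.1 hS).2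
  simp [principalMinor_singleton]

lemma mixedEsym_principalMinor_two_le {B : Matrix (Fin n) (Fin n) ℝ} (hB : B.IsSymm) {l : ℕ}
    {a : Fin n → ℝ} (ha : ∀ i, 0 < a i) (hl : l + 2 ≤ n) :
    mixedEsym (principalMinor B) 2 l a ≤ mixedEsym (fun S => ∏ i ∈ S, B i i) 2 l a ∧
      (mixedEsym (principalMinor B) 2 l a = mixedEsym (fun S => ∏ i ∈ S, B i i) 2 l a →
        ∀ i j, i ≠ j → B i j = 0) := by
  have key : ∀ i j : Fin n, i ≠ j → principalMinor B {i, j} =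
      (∏ p ∈ {i, j}, B p p) - B i j ^ 2 := by
    intro i j hij
    rw [principalMinor_pair B hij, Finset.prod_pair hij, hB.apply i j]
    ring
  have hpos : ∀ S : Finset (Fin n), S.card = 2 → 0 < esym Sᶜ l a := fun S hS =>
    esym_pos (by rw [Finset.card_compl, Fintype.card_fin, hS]; omega) fun i _ => ha i
  have hle : ∀ S ∈ (Finset.univ : Finset (Fin n)).powersetCard 2,
      principalMinor B S * esym Sᶜ l a ≤ (∏ i ∈ S, B i i) * esym Sᶜ l a := by
    intro S hS
    have hc := (Finset.mem_powersetCard.1 hS).2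
    obtain ⟨i, j, hij, rfl⟩ := Finset.card_eq_two.1 hc
    refine mul_le_mul_of_nonneg_right ?_ (hpos _ hc).le
    rw [key i j hij]
    nlinarith [sq_nonneg (B i j)]
  refine ⟨Finset.sum_le_sum hle, fun h i j hij => ?_⟩
  have h1 := (Finset.sum_eq_sum_iff_of_le hle).1 h {i, j}
    (Finset.mem_powersetCard.2 ⟨Finset.subset_univ _, Finset.card_pair hij⟩)
  have h2 := mul_right_cancel₀ (hpos _ (Finset.card_pair hij)).ne' h1
  rw [key i j hij] at h2
  exact pow_eq_zero_iff (two_ne_zero) |>.1 (by linarith)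

lemma pencil_congr_diagonal {A₀ A₁ T : Matrix (Fin n) (Fin n) ℝ} {a : Fin n → ℝ}
    (hT0 : T.transpose * A₀ * T = 1) (hT1 : T.transpose * A₁ * T = Matrix.diagonal a)
    (A₂ : Matrix (Fin n) (Fin n) ℝ) {k j : ℕ} (hj : j ≤ k) (hk : k ≤ n) :
    mixedEsym (principalMinor (T.transpose * A₂ * T)) j (k - j) a =
      T.det ^ 2 * (pencil ![A₀, A₁, A₂]).coeff (expo (n - k) (k - j) j) := by
  rw [← MvPolynomial.coeff_C_mul, ← pencil_conj, ← coeff_pencil_one_diagonal hj hk]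
  congr 2
  ext i : 1
  fin_cases i <;> simp [hT0, hT1]

/-- The pointwise concavity statement. -/
lemma coeff_pencil_two_nonpos {A₀ A₁ A₂ : Matrix (Fin n) (Fin n) ℝ} (h0 : A₀.PosDef)
    (h1 : A₁.PosDef) (h2 : A₂.IsSymm) {k : ℕ} (hk : 2 ≤ k) (hkn : k ≤ n)
    (hc : (pencil ![A₀, A₁, A₂]).coeff (expo (n - k) (k - 1) 1) = 0) :
    (pencil ![A₀, A₁, A₂]).coeff (expo (n - k) (k - 2) 2) ≤ 0 ∧
      ((pencil ![A₀, A₁, A₂]).coeff (expo (n - k) (k - 2) 2) = 0 → A₂ = 0) := by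
  obtain ⟨T, a, hT, ha, hT0, hT1⟩ := exists_simultaneous_diagonal h0 h1
  set B := T.transpose * A₂ * T with hB
  have hBs : B.IsSymm := by
    rw [Matrix.IsSymm, hB]
    simp only [Matrix.transpose_mul, Matrix.transpose_transpose, h2.eq, Matrix.mul_assoc]
  have hdet : 0 < T.det ^ 2 := by positivity
  have e1 := pencil_congr_diagonal hT0 hT1 A₂ (show 1 ≤ k by omega) hkn
  have e2 := pencil_congr_diagonal hT0 hT1 A₂ hk hkn
  rw [hc, mul_zero, ← hB, mixedEsym_principalMinor_one] at e1
  obtain ⟨m1, m2⟩ := mixedEsym_two_nonpos hk (by simpa using hkn) ha e1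
  obtain ⟨p1, p2⟩ := mixedEsym_principalMinor_two_le hBs ha (l := k - 2) (by omega)
  rw [← hB] at e2
  constructor
  · by_contra hneg
    have := mul_pos hdet (not_le.1 hneg)
    linarith
  · intro hz
    rw [hz, mul_zero] at e2
    have hd := m2 (by linarith)
    have ho := p2 (by linarith)
    have hB0 : B = 0 := by
      ext i j
      by_cases hij : i = j
      · subst hij; exact congrFun hd i
      · exact ho i j hij
    have hu : IsUnit T := (Matrix.isUnit_iff_isUnit_det _).2 hT.isUnit
    have hu' : IsUnit T.transpose :=
      (Matrix.isUnit_iff_isUnit_det _).2 (by rw [Matrix.det_transpose]; exact hT.isUnit)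
    rw [hB, hu.mul_left_eq_zero, hu'.mul_right_eq_zero] at hB0
    exact hB0

/-- The first-order coefficient, transferred from the case `k = 1` to the case `k = 2` of the
pencil spanned by `A₀` twice. -/
lemma coeff_pencil_self {A₀ A₁ A₂ : Matrix (Fin n) (Fin n) ℝ} (h0 : A₀.PosDef) (h1 : A₁.PosDef)
    (hn : 2 ≤ n) (hc : (pencil ![A₀, A₁, A₂]).coeff (expo (n - 1) (1 - 1) 1) = 0) :
    (pencil ![A₀, A₀, A₂]).coeff (expo (n - 2) (2 - 1) 1) = 0 := by
  obtain ⟨T, a, hT, ha, hT0, hT1⟩ := exists_simultaneous_diagonal h0 h1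
  have hT0' : T.transpose * A₀ * T = Matrix.diagonal fun _ => (1 : ℝ) := by
    rw [hT0, Matrix.diagonal_one]
  have hdet : T.det ^ 2 ≠ 0 := by positivity
  have e1 := pencil_congr_diagonal hT0 hT1 A₂ (le_refl 1) (by omega)
  have e2 := pencil_congr_diagonal hT0 hT0' A₂ (show 1 ≤ 2 by omega) hn
  rw [hc, mul_zero] at e1
  refine (mul_eq_zero.1 (e2.symm.trans ?_)).resolve_left hdet
  have h3 : mixedEsym (principalMinor (T.transpose * A₂ * T)) 1 (2 - 1) (fun _ => (1 : ℝ)) =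
      (n - 1 : ℝ) * mixedEsym (principalMinor (T.transpose * A₂ * T)) 1 (1 - 1) a := by
    unfold mixedEsym
    rw [Finset.mul_sum]
    refine Finset.sum_congr rfl fun S hS => ?_
    have hc := (Finset.mem_powersetCard.1 hS).2
    rw [show 2 - 1 = 1 from rfl, show 1 - 1 = 0 from rfl, esym_zero, esym_one, Finset.sum_const,
      Finset.card_compl, Fintype.card_fin, hc, nsmul_eq_mul, Nat.cast_sub (by omega)]
    push_cast
    ring
  rw [h3, e1, mul_zero]

end PointwisePencil

section CoeffMap

variable {σ R : Type*} [CommRing R] [Algebra ℝ R]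

/-- Apply a linear functional to all the coefficients of a polynomial. -/
def coeffMap (φ : R →ₗ[ℝ] ℝ) (P : MvPolynomial σ R) : MvPolynomial σ ℝ :=
  ∑ m ∈ P.support, MvPolynomial.monomial m (φ (P.coeff m))

lemma coeff_coeffMap (φ : R →ₗ[ℝ] ℝ) (P : MvPolynomial σ R) (m : σ →₀ ℕ) :
    (coeffMap φ P).coeff m = φ (P.coeff m) := by
  classical
  rw [coeffMap, MvPolynomial.coeff_sum]
  simp_rw [MvPolynomial.coeff_monomial]
  rw [Finset.sum_ite_eq' P.support m]
  split_ifs with h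
  · rfl
  · rw [MvPolynomial.notMem_support_iff.1 h, map_zero]

lemma eval_coeffMap [Fintype σ] (φ : R →ₗ[ℝ] ℝ) (P : MvPolynomial σ R) (v : σ → ℝ) :
    MvPolynomial.eval v (coeffMap φ P) =
      φ (MvPolynomial.eval (fun i => algebraMap ℝ R (v i)) P) := by
  rw [coeffMap, map_sum, MvPolynomial.eval_eq', map_sum]
  refine Finset.sum_congr rfl fun m _ => ?_
  rw [MvPolynomial.eval_monomial, Finsupp.prod_fintype _ _ (by simp)]
  simp_rw [← map_pow]
  rw [← map_prod, mul_comm (P.coeff m), ← Algebra.smul_def, map_smul, smul_eq_mul, mul_comm]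

lemma coeffMap_pderiv (φ : R →ₗ[ℝ] ℝ) (P : MvPolynomial σ R) (i : σ) :
    coeffMap φ (MvPolynomial.pderiv i P) = MvPolynomial.pderiv i (coeffMap φ P) := by
  ext m
  rw [coeff_coeffMap, MvPolynomial.coeff_pderiv, MvPolynomial.coeff_pderiv, coeff_coeffMap]
  have : P.coeff (m + Finsupp.single i 1) * ((m i : R) + 1) =
      ((m i : ℝ) + 1) • P.coeff (m + Finsupp.single i 1) := by
    rw [Algebra.smul_def, mul_comm]
    simp
  rw [this, map_smul, smul_eq_mul, mul_comm]

end CoeffMap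

section Jacobian

variable {n : ℕ}

/-- The Jacobian matrix of a vector field. -/
def jac (F : EuclideanSpace ℝ (Fin n) → EuclideanSpace ℝ (Fin n)) (y : EuclideanSpace ℝ (Fin n)) :
    Matrix (Fin n) (Fin n) ℝ :=
  Matrix.of fun i j => fderiv ℝ F y (EuclideanSpace.single j 1) i

lemma det_eq_det_matrix (L : EuclideanSpace ℝ (Fin n) →L[ℝ] EuclideanSpace ℝ (Fin n)) :
    L.det = (Matrix.of fun i j => L (EuclideanSpace.single j 1) i).det := by
  rw [ContinuousLinearMap.det,
    ← LinearMap.det_toMatrix (EuclideanSpace.basisFun (Fin n) ℝ).toBasis]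
  congr 1

lemma continuous_jac {F : EuclideanSpace ℝ (Fin n) → EuclideanSpace ℝ (Fin n)}
    (hF : ContDiff ℝ 1 F) : Continuous (jac F) := by
  refine continuous_matrix fun i j => ?_
  have h1 : Continuous fun y => fderiv ℝ F y (EuclideanSpace.single j 1) :=
    (hF.continuous_fderiv (by norm_num)).clm_apply continuous_const
  exact (EuclideanSpace.proj (𝕜 := ℝ) i).continuous.comp h1

lemma bijective_smul_add {K : NNReal} {c : ℝ}
    {Φ : EuclideanSpace ℝ (Fin n) → EuclideanSpace ℝ (Fin n)} (hΦ : LipschitzWith K Φ)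
    (hc : (K : ℝ) < c) : Function.Bijective fun y => c • y + Φ y := by
  have hc0 : 0 < c := K.2.trans_lt hc
  constructor
  · intro y y' h
    have h1 : c • (y - y') = Φ y' - Φ y := by
      rw [smul_sub, sub_eq_sub_iff_add_eq_add]
      simp only at h
      rw [h, add_comm]
    have h2 := hΦ.dist_le_mul y' y
    rw [dist_eq_norm, ← h1, norm_smul, Real.norm_of_nonneg hc0.le, dist_comm, dist_eq_norm] at h2
    have h3 : ‖y - y'‖ = 0 := by
      by_contra h0
      have := lt_of_le_of_ne (norm_nonneg (y - y')) (Ne.symm h0)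
      nlinarith
    exact sub_eq_zero.1 (norm_eq_zero.1 h3)
  · intro z
    have hcn : ((Real.toNNReal c⁻¹ : NNReal) : ℝ) = c⁻¹ :=
      Real.coe_toNNReal _ (inv_nonneg.2 hc0.le)
    have hK : c⁻¹ * K < 1 := by rw [inv_mul_lt_iff₀ hc0]; simpa using hc
    have hcon : ContractingWith (Real.toNNReal c⁻¹ * K) fun y => c⁻¹ • (z - Φ y) := by
      refine ⟨by rw [← NNReal.coe_lt_coe]; push_cast; rwa [hcn],
        LipschitzWith.of_dist_le_mul fun y y' => ?_⟩
      rw [dist_eq_norm, ← smul_sub, norm_smul, Real.norm_of_nonneg (inv_nonneg.2 hc0.le)]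
      rw [show z - Φ y - (z - Φ y') = Φ y' - Φ y by abel, ← dist_eq_norm, dist_comm y]
      have := hΦ.dist_le_mul y' y
      calc _ ≤ c⁻¹ * (K * dist y' y) := by gcongr
        _ = _ := by push_cast; rw [hcn, mul_assoc]
    refine ⟨hcon.fixedPoint, ?_⟩
    have := hcon.fixedPoint_isFixedPt
    simp only [Function.IsFixedPt] at this
    have h4 : c • hcon.fixedPoint = z - Φ hcon.fixedPoint := by
      conv_lhs => rw [← this]
      rw [smul_smul, mul_inv_cancel₀ hc0.ne', one_smul]
    simp [h4]

lemma det_smul_one_add_pos {c : ℝ} {L : EuclideanSpace ℝ (Fin n) →L[ℝ] EuclideanSpace ℝ (Fin n)}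
    (hL : ‖L‖ < c) : 0 < (c • ContinuousLinearMap.id ℝ (EuclideanSpace ℝ (Fin n)) + L).det := by
  have hc0 : 0 < c := (norm_nonneg _).trans_lt hL
  set f : ℝ → ℝ := fun τ =>
    (c • ContinuousLinearMap.id ℝ (EuclideanSpace ℝ (Fin n)) + τ • L).det with hf
  have hcont : Continuous f := by
    simp only [hf, det_eq_det_matrix]
    refine Continuous.matrix_det (continuous_matrix fun i j => ?_)
    simp only [Matrix.of_apply, _root_.add_apply, _root_.smul_apply,
      PiLp.add_apply, PiLp.smul_apply]
    fun_prop
  have hne : ∀ τ ∈ Icc (0 : ℝ) 1, f τ ≠ 0 := by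
    intro τ hτ h0
    obtain ⟨v, hv, hv0⟩ := (LinearMap.bot_lt_ker_of_det_eq_zero h0).ne'.symm |> fun h =>
      (Submodule.ne_bot_iff _).1 h.symm
    have h1 : c • v = -(τ • L v) := by
      have : c • v + τ • L v = 0 := by simpa using hv
      exact eq_neg_of_add_eq_zero_left this
    have h2 : c * ‖v‖ = τ * ‖L v‖ := by
      have := congrArg norm h1
      rwa [norm_neg, norm_smul, norm_smul, Real.norm_of_nonneg hc0.le,
        Real.norm_of_nonneg hτ.1] at this
    have h3 := L.le_opNorm v
    have h4 : 0 < ‖v‖ := norm_pos_iff.2 hv0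
    have h5 : τ * ‖L v‖ ≤ ‖L v‖ := mul_le_of_le_one_left (norm_nonneg _) hτ.2
    nlinarith
  have h0 : 0 < f 0 := by
    have h1 : f 0 = c ^ n := by
      have h2 : (Matrix.of fun i j => (c • ContinuousLinearMap.id ℝ (EuclideanSpace ℝ (Fin n)) +
          (0 : ℝ) • L) (EuclideanSpace.single j 1) i) = c • (1 : Matrix (Fin n) (Fin n) ℝ) := by
        ext i j
        simp [Matrix.one_apply]
      simp only [hf, det_eq_det_matrix, h2]
      simp
    rw [h1]
    positivity
  by_contra hneg
  have h1 : f 1 ≤ 0 := by simpa [hf] using hneg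
  obtain ⟨τ, hτ, hτ0⟩ := intermediate_value_Icc' zero_le_one hcont.continuousOn ⟨h1, h0.le⟩
  exact hne τ hτ hτ0

/-- The integral of `det (c I + DΦ)` does not depend on the compactly supported field `Φ`. -/
lemma integral_det_smul_one_add {K : NNReal} {c r : ℝ}
    {Φ : EuclideanSpace ℝ (Fin n) → EuclideanSpace ℝ (Fin n)}
    (hΦ1 : ContDiff ℝ 1 Φ) (hΦ : LipschitzWith K Φ) (hc : (K : ℝ) < c)
    (h0 : ∀ y, r ≤ ‖y‖ → Φ y = 0) :
    ∫ y in Metric.ball 0 r, (c • (1 : Matrix (Fin n) (Fin n) ℝ) + jac Φ y).det =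
      c ^ n * volume.real (Metric.ball (0 : EuclideanSpace ℝ (Fin n)) r) := by
  have hc0 : 0 < c := K.2.trans_lt hc
  obtain ⟨hinj, hsurj⟩ := bijective_smul_add hΦ hc
  set ψ := fun y => c • y + Φ y with hψ
  have hout : ∀ y, r ≤ ‖y‖ → ψ y = c • y := fun y hy => by simp [hψ, h0 y hy]
  have himg : ψ '' Metric.ball 0 r = Metric.ball 0 (c * r) := by
    ext z
    constructor
    · rintro ⟨y, hy, rfl⟩
      rw [mem_ball_zero_iff] at hy ⊢
      by_contra hz
      have h1 : r ≤ ‖c⁻¹ • ψ y‖ := by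
        rw [norm_smul, Real.norm_of_nonneg (inv_nonneg.2 hc0.le), le_inv_mul_iff₀ hc0]
        exact not_lt.1 hz
      have h2 : ψ (c⁻¹ • ψ y) = ψ y := by
        rw [hout _ h1, smul_smul, mul_inv_cancel₀ hc0.ne', one_smul]
      rw [hinj h2] at h1
      linarith
    · intro hz
      obtain ⟨y, rfl⟩ := hsurj z
      refine ⟨y, ?_, rfl⟩
      rw [mem_ball_zero_iff] at hz ⊢
      by_contra hy
      change ‖ψ y‖ < _ at hz
      rw [hout y (not_lt.1 hy), norm_smul, Real.norm_of_nonneg hc0.le] at hz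
      exact hy (lt_of_mul_lt_mul_left hz hc0.le)
  have hder : ∀ y, HasFDerivAt ψ
      (c • ContinuousLinearMap.id ℝ (EuclideanSpace ℝ (Fin n)) + fderiv ℝ Φ y) y := fun y =>
    ((hasFDerivAt_id y).const_smul c).add (hΦ1.differentiable (by norm_num) y).hasFDerivAt
  have hcv := integral_image_eq_integral_abs_det_fderiv_smul (volume) measurableSet_ball
    (fun y _ => (hder y).hasFDerivWithinAt) hinj.injOn (fun _ => (1 : ℝ)) (s := Metric.ball 0 r)
  rw [himg] at hcv
  have hdet : ∀ y, |(c • ContinuousLinearMap.id ℝ (EuclideanSpace ℝ (Fin n)) +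
      fderiv ℝ Φ y).det| • (1 : ℝ) = (c • (1 : Matrix (Fin n) (Fin n) ℝ) + jac Φ y).det := by
    intro y
    rw [abs_of_pos (det_smul_one_add_pos ((norm_fderiv_le_of_lipschitz ℝ hΦ).trans_lt hc)),
      smul_eq_mul, mul_one, det_eq_det_matrix]
    congr 1
    ext i j
    simp [jac, Matrix.one_apply]
  simp_rw [hdet] at hcv
  rw [← hcv, setIntegral_const, smul_eq_mul, mul_one, Measure.real, Measure.real,
    Measure.addHaar_ball_mul_of_pos _ _ hc0, finrank_euclideanSpace_fin, ENNReal.toReal_mul,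
    ENNReal.toReal_ofReal (by positivity)]

end Jacobian

section NullLagrangian

variable {n : ℕ}

/-- Integration over a ball as a linear functional on continuous functions. -/
def ballIntegral (n : ℕ) (r : ℝ) : C(EuclideanSpace ℝ (Fin n), ℝ) →ₗ[ℝ] ℝ where
  toFun f := ∫ y in Metric.ball 0 r, f y
  map_add' f g := integral_add
    ((f.continuous.continuousOn.integrableOn_compact (isCompact_closedBall 0 r)).mono_set
      Metric.ball_subset_closedBall)
    ((g.continuous.continuousOn.integrableOn_compact (isCompact_closedBall 0 r)).mono_set
      Metric.ball_subset_closedBall)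
  map_smul' c _ := integral_const_mul c _

lemma ballIntegral_apply (r : ℝ) (f : C(EuclideanSpace ℝ (Fin n), ℝ)) :
    ballIntegral n r f = ∫ y in Metric.ball 0 r, f y := rfl

/-- A continuous matrix-valued function as a matrix of continuous functions. -/
def contMatrix (A : EuclideanSpace ℝ (Fin n) → Matrix (Fin n) (Fin n) ℝ) (hA : Continuous A) :
    Matrix (Fin n) (Fin n) C(EuclideanSpace ℝ (Fin n), ℝ) :=
  Matrix.of fun i j => ⟨fun y => A y i j, hA.matrix_elem i j⟩

/-- Evaluation at a point. -/
abbrev evalAt (y : EuclideanSpace ℝ (Fin n)) : C(EuclideanSpace ℝ (Fin n), ℝ) →+* ℝ :=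
  (ContinuousMap.evalAlgHom ℝ ℝ y).toRingHom

lemma coeff_pencil_apply (A : Fin 3 → Matrix (Fin n) (Fin n) C(EuclideanSpace ℝ (Fin n), ℝ))
    (m : Fin 3 →₀ ℕ) (y : EuclideanSpace ℝ (Fin n)) :
    (pencil A).coeff m y = (pencil fun i => (A i).map (evalAt y)).coeff m := by
  rw [← map_pencil, MvPolynomial.coeff_map]
  rfl

lemma evalAt_trace_adjugate_mul (M N : Matrix (Fin n) (Fin n) C(EuclideanSpace ℝ (Fin n), ℝ))
    (y : EuclideanSpace ℝ (Fin n)) :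
    (M.adjugate * N).trace y = ((M.map (evalAt y)).adjugate * N.map (evalAt y)).trace := by
  change evalAt y _ = _
  have h : (M.adjugate).map (evalAt y) = (M.map (evalAt y)).adjugate :=
    (evalAt y).map_adjugate M
  rw [← h, Matrix.trace, map_sum, Matrix.trace]
  refine Finset.sum_congr rfl fun i _ => ?_
  simp only [Matrix.diag_apply, Matrix.mul_apply, map_sum, map_mul, Matrix.map_apply]

lemma jac_smul_add_smul {H F : EuclideanSpace ℝ (Fin n) → EuclideanSpace ℝ (Fin n)}
    (hH : ContDiff ℝ 1 H) (hF : ContDiff ℝ 1 F) (a b : ℝ) (y : EuclideanSpace ℝ (Fin n)) :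
    jac (fun y => a • H y + b • F y) y = a • jac H y + b • jac F y := by
  have h := (((hH.differentiable (by norm_num) y).hasFDerivAt.const_smul a).add
    ((hF.differentiable (by norm_num) y).hasFDerivAt.const_smul b)).fderiv
  ext i j
  simp only [jac, Matrix.of_apply, Matrix.add_apply, Matrix.smul_apply]
  change fderiv ℝ (a • H + b • F) y _ i = _
  rw [h]
  simp

/-- Divergence-freeness of the cofactor matrix of a Jacobian, in integrated form. -/
lemma integral_trace_adjugate_jac_eq_zero {r : ℝ}
    {H F : EuclideanSpace ℝ (Fin n) → EuclideanSpace ℝ (Fin n)}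
    (hH : ContDiff ℝ 1 H) (hF : ContDiff ℝ 1 F) (hH0 : ∀ y, r ≤ ‖y‖ → H y = 0)
    (hF0 : ∀ y, r ≤ ‖y‖ → F y = 0) :
    ∫ y in Metric.ball 0 r, ((jac H y).adjugate * jac F y).trace = 0 := by
  have hcpt : ∀ Φ : EuclideanSpace ℝ (Fin n) → EuclideanSpace ℝ (Fin n),
      (∀ y, r ≤ ‖y‖ → Φ y = 0) → HasCompactSupport Φ := by
    intro Φ hΦ
    refine HasCompactSupport.of_support_subset_isCompact (isCompact_closedBall 0 r) fun y hy => ?_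
    rw [mem_closedBall_zero_iff]
    by_contra hn
    exact hy (hΦ y (not_le.1 hn).le)
  obtain ⟨K, hK⟩ := hH.lipschitzWith_of_hasCompactSupport (hcpt H hH0) (by norm_num)
  obtain ⟨L, hL⟩ := hF.lipschitzWith_of_hasCompactSupport (hcpt F hF0) (by norm_num)
  set A : Fin 3 → Matrix (Fin n) (Fin n) C(EuclideanSpace ℝ (Fin n), ℝ) :=
    ![1, contMatrix (jac H) (continuous_jac hH), contMatrix (jac F) (continuous_jac hF)] with hA
  have hAy : ∀ y, (fun i => (A i).map (evalAt y)) = ![1, jac H y, jac F y] := by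
    intro y
    ext i : 1
    fin_cases i
    · exact Matrix.map_one _ (map_zero _) (map_one _)
    · rfl
    · rfl
  set vol := volume.real (Metric.ball (0 : EuclideanSpace ℝ (Fin n)) r)
  have hsum : ∀ (v : Fin 3 → ℝ) y,
      (∑ j, algebraMap ℝ C(EuclideanSpace ℝ (Fin n), ℝ) (v j) • A j).map (evalAt y) =
        v 0 • 1 + (v 1 • jac H y + v 2 • jac F y) := by
    intro v y
    have h0 : (A 0).map (evalAt y) = 1 := congrFun (hAy y) 0
    have h1 : (A 1).map (evalAt y) = jac H y := congrFun (hAy y) 1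
    have h2 : (A 2).map (evalAt y) = jac F y := congrFun (hAy y) 2
    rw [← h0, ← h1, ← h2]
    ext p q
    simp only [Fin.sum_univ_three, Matrix.map_apply, Matrix.add_apply, Matrix.smul_apply,
      smul_eq_mul, map_add, map_mul, add_assoc]
    rfl
  have hev : ∀ (v : Fin 3 → ℝ) y,
      (MvPolynomial.eval (fun i => algebraMap ℝ C(EuclideanSpace ℝ (Fin n), ℝ) (v i))
        (pencil A)) y = (v 0 • 1 + (v 1 • jac H y + v 2 • jac F y)).det := by
    intro v y
    rw [eval_pencil]
    change evalAt y _ = _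
    rw [RingHom.map_det]
    congr 1
    exact (hsum v y)
  have hP : coeffMap (ballIntegral n r) (pencil A) =
      MvPolynomial.C vol * MvPolynomial.X 0 ^ n := by
    refine MvPolynomial.funext_set ![Ioi ((K + L : NNReal) : ℝ), Icc 0 1, Icc 0 1] ?_ ?_
    · intro i
      fin_cases i
      · exact Set.Ioi_infinite _
      · exact Set.Icc_infinite one_pos
      · exact Set.Icc_infinite one_pos
    · intro v hv
      have hv0 : ((K + L : NNReal) : ℝ) < v 0 := hv 0 trivial
      have hv1 : v 1 ∈ Icc (0 : ℝ) 1 := hv 1 trivial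
      have hv2 : v 2 ∈ Icc (0 : ℝ) 1 := hv 2 trivial
      rw [eval_coeffMap, ballIntegral_apply]
      simp_rw [hev, ← jac_smul_add_smul hH hF]
      rw [integral_det_smul_one_add (K := K + L) ?_ ?_ hv0]
      · simp [vol, mul_comm]
      · intro y hy
        simp [hH0 y hy, hF0 y hy]
      · exact (hH.const_smul _).add (hF.const_smul _)
      · refine LipschitzWith.of_dist_le_mul fun y y' => ?_
        calc _ ≤ dist (v 1 • H y) (v 1 • H y') + dist (v 2 • F y) (v 2 • F y') :=
              dist_add_add_le _ _ _ _
          _ = v 1 * dist (H y) (H y') + v 2 * dist (F y) (F y') := by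
              rw [dist_smul₀, dist_smul₀, Real.norm_of_nonneg hv1.1, Real.norm_of_nonneg hv2.1]
          _ ≤ 1 * (K * dist y y') + 1 * (L * dist y y') := by
              gcongr
              · exact hv1.2
              · exact hK.dist_le_mul _ _
              · exact hv2.2
              · exact hL.dist_le_mul _ _
          _ = _ := by push_cast; ring
  have h2 := congrArg (MvPolynomial.eval ![(0 : ℝ), 1, 0])
    (congrArg (MvPolynomial.pderiv (2 : Fin 3)) hP)
  rw [← coeffMap_pderiv, eval_coeffMap, eval_pderiv_pencil, ballIntegral_apply] at h2
  simp only [evalAt_trace_adjugate_mul] at h2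
  have h3 : MvPolynomial.eval ![(0 : ℝ), 1, 0] (MvPolynomial.pderiv (2 : Fin 3)
      (MvPolynomial.C vol * MvPolynomial.X 0 ^ n)) = 0 := by
    simp [MvPolynomial.pderiv_X]
  rw [h3] at h2
  rw [← h2]
  refine integral_congr_ae (Filter.Eventually.of_forall fun y => ?_)
  have h4 : (A 2).map (evalAt y) = jac F y := congrFun (hAy y) 2
  simp only
  rw [hsum, h4]
  simp

end NullLagrangian

section Cutoff

variable {n : ℕ}

/-- A smooth cutoff of the ball of radius `R`, converging to its indicator as `m → ∞`. -/
def cutoff (R m : ℝ) (y : EuclideanSpace ℝ (Fin n)) : ℝ :=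
  Real.smoothTransition (m * (R ^ 2 - ‖y‖ ^ 2))

/-- The factor by which the gradient of `cutoff` is an inward radial field. -/
def cutoffWeight (R m : ℝ) (y : EuclideanSpace ℝ (Fin n)) : ℝ :=
  2 * m * deriv Real.smoothTransition (m * (R ^ 2 - ‖y‖ ^ 2))

lemma contDiff_cutoff (R m : ℝ) : ContDiff ℝ 1 (cutoff (n := n) R m) :=
  (Real.smoothTransition.contDiff (n := 1)).comp
    (contDiff_const.mul (contDiff_const.sub (contDiff_norm_sq ℝ)))

lemma fderiv_cutoff (R m : ℝ) (y v : EuclideanSpace ℝ (Fin n)) :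
    fderiv ℝ (cutoff R m) y v = -cutoffWeight R m y * ⟪y, v⟫ := by
  have h1 : HasFDerivAt (fun y : EuclideanSpace ℝ (Fin n) => m * (R ^ 2 - ‖y‖ ^ 2))
      (m • -((2 : ℕ) • innerSL ℝ y : EuclideanSpace ℝ (Fin n) →L[ℝ] ℝ)) y :=
    ((hasStrictFDerivAt_norm_sq y).hasFDerivAt.const_sub (R ^ 2)).const_mul m
  have h2 : HasDerivAt Real.smoothTransition
      (deriv Real.smoothTransition (m * (R ^ 2 - ‖y‖ ^ 2))) (m * (R ^ 2 - ‖y‖ ^ 2)) :=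
    ((Real.smoothTransition.contDiff (n := 1)).differentiable (by norm_num) _).hasDerivAt
  have h3 := (h2.comp_hasFDerivAt y h1).fderiv
  change fderiv ℝ (cutoff R m) y = _ at h3
  rw [h3, cutoffWeight]
  simp
  ring

lemma cutoffWeight_nonneg {m : ℝ} (hm : 0 ≤ m) (R : ℝ) (y : EuclideanSpace ℝ (Fin n)) :
    0 ≤ cutoffWeight R m y :=
  mul_nonneg (by positivity) Real.smoothTransition.monotone.deriv_nonneg

lemma continuous_cutoffWeight (R m : ℝ) : Continuous (cutoffWeight (n := n) R m) := by
  have := (Real.smoothTransition.contDiff (n := 1)).continuous_deriv le_rfl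
  unfold cutoffWeight
  fun_prop

lemma cutoffWeight_eq_zero_of_le {R m : ℝ} (hm : 0 ≤ m) (hR : 0 ≤ R)
    {y : EuclideanSpace ℝ (Fin n)} (hy : R ≤ ‖y‖) : cutoffWeight R m y = 0 := by
  have h1 : m * (R ^ 2 - ‖y‖ ^ 2) ≤ 0 :=
    mul_nonpos_of_nonneg_of_nonpos hm (sub_nonpos.2 (pow_le_pow_left₀ hR hy 2))
  have h2 : deriv Real.smoothTransition (m * (R ^ 2 - ‖y‖ ^ 2)) = 0 := by
    refine IsLocalMin.deriv_eq_zero (Filter.Eventually.of_forall fun x => ?_)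
    rw [Real.smoothTransition.zero_of_nonpos h1]
    exact Real.smoothTransition.nonneg x
  rw [cutoffWeight, h2, mul_zero]

lemma cutoffWeight_eq_zero_of_one_le {R m : ℝ} {y : EuclideanSpace ℝ (Fin n)}
    (hy : 1 ≤ m * (R ^ 2 - ‖y‖ ^ 2)) : cutoffWeight R m y = 0 := by
  have h2 : deriv Real.smoothTransition (m * (R ^ 2 - ‖y‖ ^ 2)) = 0 := by
    refine IsLocalMax.deriv_eq_zero (Filter.Eventually.of_forall fun x => ?_)
    rw [Real.smoothTransition.one_of_one_le hy]
    exact Real.smoothTransition.le_one x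
  rw [cutoffWeight, h2, mul_zero]

lemma cutoff_eq_zero {R m : ℝ} (hm : 0 ≤ m) (hR : 0 ≤ R)
    {y : EuclideanSpace ℝ (Fin n)} (hy : R ≤ ‖y‖) : cutoff R m y = 0 :=
  Real.smoothTransition.zero_of_nonpos
    (mul_nonpos_of_nonneg_of_nonpos hm (sub_nonpos.2 (pow_le_pow_left₀ hR hy 2)))

lemma jac_smul {η : EuclideanSpace ℝ (Fin n) → ℝ}
    {F : EuclideanSpace ℝ (Fin n) → EuclideanSpace ℝ (Fin n)} {y : EuclideanSpace ℝ (Fin n)}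
    (hη : DifferentiableAt ℝ η y) (hF : DifferentiableAt ℝ F y) :
    jac (fun y => η y • F y) y = η y • jac F y +
      Matrix.vecMulVec (F y) fun j => fderiv ℝ η y (EuclideanSpace.single j 1) := by
  ext i j
  simp only [jac, Matrix.of_apply, Matrix.add_apply, Matrix.smul_apply, Matrix.vecMulVec_apply]
  have h := (hη.hasFDerivAt.smul hF.hasFDerivAt).fderiv
  change fderiv ℝ (η • F) y _ i = _
  rw [h]
  simp [mul_comm]

lemma continuous_trace_adjugate_jac
    {H F : EuclideanSpace ℝ (Fin n) → EuclideanSpace ℝ (Fin n)}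
    (hH : ContDiff ℝ 1 H) (hF : ContDiff ℝ 1 F) :
    Continuous fun y => ((jac H y).adjugate * jac F y).trace :=
  ((continuous_jac hH).matrix_adjugate.matrix_mul (continuous_jac hF)).matrix_trace

lemma continuous_radial_flux
    {H F : EuclideanSpace ℝ (Fin n) → EuclideanSpace ℝ (Fin n)}
    (hH : ContDiff ℝ 1 H) (hF : ContDiff ℝ 1 F) :
    Continuous fun y : EuclideanSpace ℝ (Fin n) => ⇑y ⬝ᵥ (jac H y).adjugate.mulVec (F y) := by
  have h1 : Continuous fun y : EuclideanSpace ℝ (Fin n) => (⇑(F y) : Fin n → ℝ) :=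
    (PiLp.continuous_ofLp 2 _).comp hF.continuous
  exact (PiLp.continuous_ofLp 2 _).dotProduct
    ((continuous_jac hH).matrix_adjugate.matrix_mulVec h1)

lemma integrableOn_ball {f : EuclideanSpace ℝ (Fin n) → ℝ} (hf : Continuous f) (R : ℝ) :
    IntegrableOn f (Metric.ball 0 R) :=
  (hf.continuousOn.integrableOn_compact (isCompact_closedBall 0 R)).mono_set
    Metric.ball_subset_closedBall

lemma integral_cutoff_mul_trace {R m : ℝ} (hR : 0 < R) (hm : 0 ≤ m)
    {H F : EuclideanSpace ℝ (Fin n) → EuclideanSpace ℝ (Fin n)}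
    (hH : ContDiff ℝ 1 H) (hF : ContDiff ℝ 1 F) (hHc : HasCompactSupport H) :
    ∫ y in Metric.ball 0 R, cutoff R m y * ((jac H y).adjugate * jac F y).trace =
      ∫ y in Metric.ball 0 R,
        cutoffWeight R m y * (⇑y ⬝ᵥ (jac H y).adjugate.mulVec (F y)) := by
  obtain ⟨r₀, hr₀⟩ := hHc.isCompact.isBounded.subset_closedBall 0
  set r := max R (r₀ + 1) with hr
  have hH0 : ∀ y, r ≤ ‖y‖ → H y = 0 := by
    intro y hy
    by_contra hne
    have := hr₀ (subset_tsupport H hne)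
    rw [mem_closedBall_zero_iff] at this
    linarith [le_max_right R (r₀ + 1)]
  have hc := contDiff_cutoff (n := n) R m
  have key := integral_trace_adjugate_jac_eq_zero hH (hc.smul hF) hH0
    (fun y hy => by
      change cutoff R m y • F y = 0
      rw [cutoff_eq_zero hm hR.le ((le_max_left _ _).trans hy), zero_smul])
  have hpt : ∀ y, ((jac H y).adjugate * jac (cutoff (n := n) R m • F) y).trace =
      cutoff R m y * ((jac H y).adjugate * jac F y).trace -
        cutoffWeight R m y * (⇑y ⬝ᵥ (jac H y).adjugate.mulVec (F y)) := by
    intro y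
    change ((jac H y).adjugate * jac (fun y => cutoff R m y • F y) y).trace = _
    rw [jac_smul (hc.differentiable (by norm_num) y) (hF.differentiable (by norm_num) y),
      Matrix.mul_add, Matrix.trace_add, Matrix.mul_smul, Matrix.trace_smul, smul_eq_mul,
      Matrix.mul_vecMulVec, Matrix.trace_vecMulVec]
    have : (fun j => fderiv ℝ (cutoff R m) y (EuclideanSpace.single j 1)) =
        -cutoffWeight R m y • (⇑y : Fin n → ℝ) := by
      ext j
      rw [fderiv_cutoff]
      simp [EuclideanSpace.inner_single_right]
    rw [this, dotProduct_smul, dotProduct_comm, smul_eq_mul]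
    ring
  simp_rw [hpt] at key
  have hsub : Metric.ball (0 : EuclideanSpace ℝ (Fin n)) R ⊆ Metric.ball 0 r :=
    Metric.ball_subset_ball (le_max_left _ _)
  rw [setIntegral_eq_of_subset_of_forall_sdiff_eq_zero measurableSet_ball hsub, integral_sub,
    sub_eq_zero] at key
  · exact key
  · exact integrableOn_ball (hc.continuous.mul (continuous_trace_adjugate_jac hH hF)) R
  · exact integrableOn_ball
      ((continuous_cutoffWeight R m).mul (continuous_radial_flux hH hF)) R
  · intro y hy
    have hy' : R ≤ ‖y‖ := by
      by_contra hlt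
      exact hy.2 (mem_ball_zero_iff.2 (not_le.1 hlt))
    rw [cutoff_eq_zero hm hR.le hy', cutoffWeight_eq_zero_of_le hm hR.le hy']
    ring

/-- A smooth compactly supported function equal to one near a closed ball, inside an open set. -/
lemma exists_bump {R : ℝ} (hR : 0 < R) {U : Set (EuclideanSpace ℝ (Fin n))} (hU : IsOpen U)
    (hRU : Metric.closedBall 0 R ⊆ U) :
    ∃ χ : EuclideanSpace ℝ (Fin n) → ℝ, ContDiff ℝ 2 χ ∧ HasCompactSupport χ ∧ tsupport χ ⊆ U ∧
      ∀ y ∈ Metric.closedBall 0 R, χ =ᶠ[nhds y] 1 := by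
  obtain ⟨δ, hδ, hsub⟩ := (isCompact_closedBall (0 : EuclideanSpace ℝ (Fin n)) R)
    |>.exists_cthickening_subset_open hU hRU
  rw [cthickening_closedBall hδ.le hR.le] at hsub
  let χ : ContDiffBump (0 : EuclideanSpace ℝ (Fin n)) :=
    ⟨R + δ / 2, δ + R, by positivity, by linarith⟩
  refine ⟨χ, χ.contDiff, χ.hasCompactSupport, χ.tsupport_eq.trans_subset hsub, fun y hy => ?_⟩
  refine χ.eventuallyEq_one_of_mem_ball ?_
  rw [mem_closedBall_zero_iff] at hy
  rw [mem_ball_zero_iff]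
  change ‖y‖ < R + δ / 2
  linarith

lemma integral_cutoffWeight_le {R m : ℝ} (hR : 0 < R) (hm : 0 ≤ m) :
    ∫ y in Metric.ball (0 : EuclideanSpace ℝ (Fin n)) R, cutoffWeight R m y * ‖y‖ ^ 2 ≤
      n * volume.real (Metric.ball (0 : EuclideanSpace ℝ (Fin n)) R) := by
  obtain ⟨χ, hχ, hχc, -, hχ1⟩ := exists_bump (n := n) hR isOpen_univ (subset_univ _)
  have hH : ContDiff ℝ 1 fun y : EuclideanSpace ℝ (Fin n) => χ y • y :=
    (hχ.of_le (by norm_num)).smul contDiff_id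
  have hid : ∀ y, jac (fun y : EuclideanSpace ℝ (Fin n) => y) y = 1 := by
    intro y
    ext i j
    simp [jac, Matrix.one_apply]
  have hjac : ∀ y ∈ Metric.ball (0 : EuclideanSpace ℝ (Fin n)) R,
      jac (fun y : EuclideanSpace ℝ (Fin n) => χ y • y) y = 1 := by
    intro y hy
    have he : (fun y : EuclideanSpace ℝ (Fin n) => χ y • y) =ᶠ[nhds y] fun y => y := by
      filter_upwards [hχ1 y (Metric.ball_subset_closedBall hy)] with z hz
      simp [hz]
    rw [← hid y]
    unfold jac
    rw [he.fderiv_eq]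
  have key := integral_cutoff_mul_trace hR hm hH contDiff_id (hχc.smul_right)
  have e1 : ∫ y in Metric.ball (0 : EuclideanSpace ℝ (Fin n)) R, cutoffWeight R m y * ‖y‖ ^ 2 =
      ∫ y in Metric.ball (0 : EuclideanSpace ℝ (Fin n)) R, cutoff R m y * n := by
    refine Eq.trans ?_ (key.symm.trans ?_)
    · refine setIntegral_congr_fun measurableSet_ball fun y hy => ?_
      beta_reduce
      rw [hjac y hy, Matrix.adjugate_one, Matrix.one_mulVec, EuclideanSpace.real_norm_sq_eq]
      simp [dotProduct, sq]
    · refine setIntegral_congr_fun measurableSet_ball fun y hy => ?_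
      beta_reduce
      rw [hjac y hy, Matrix.adjugate_one]
      change _ * (1 * jac (fun y => y) y).trace = _
      rw [hid]
      simp
  rw [e1, mul_comm (n : ℝ), ← smul_eq_mul, ← setIntegral_const]
  refine setIntegral_mono_on (integrableOn_ball
    ((contDiff_cutoff R m).continuous.mul continuous_const) R)
    (integrableOn_ball continuous_const R) measurableSet_ball fun y _ => ?_
  exact mul_le_of_le_one_left (Nat.cast_nonneg n) (Real.smoothTransition.le_one _)

/-- The divergence theorem for a field with vanishing normal component on the sphere. -/
theorem integral_trace_adjugate_jac_eq_zero_of_flux {R : ℝ} (hR : 0 < R)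
    {H F : EuclideanSpace ℝ (Fin n) → EuclideanSpace ℝ (Fin n)}
    (hH : ContDiff ℝ 1 H) (hF : ContDiff ℝ 1 F) (hHc : HasCompactSupport H)
    (hflux : ∀ y : EuclideanSpace ℝ (Fin n), ‖y‖ = R →
      ⇑y ⬝ᵥ (jac H y).adjugate.mulVec (F y) = 0) :
    ∫ y in Metric.ball 0 R, ((jac H y).adjugate * jac F y).trace = 0 := by
  set T : EuclideanSpace ℝ (Fin n) → ℝ := fun y => ((jac H y).adjugate * jac F y).trace with hT
  set b : EuclideanSpace ℝ (Fin n) → ℝ :=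
    fun y => ⇑y ⬝ᵥ (jac H y).adjugate.mulVec (F y) with hb
  have hTc : Continuous T := continuous_trace_adjugate_jac hH hF
  have hbc : Continuous b := continuous_radial_flux hH hF
  set N : ℝ := n * volume.real (Metric.ball (0 : EuclideanSpace ℝ (Fin n)) R) with hN
  have hN0 : 0 ≤ N := by positivity
  have hlim : Filter.Tendsto
      (fun m : ℕ => ∫ y in Metric.ball 0 R, cutoff R m y * T y) Filter.atTop
      (nhds (∫ y in Metric.ball 0 R, T y)) := by
    refine tendsto_integral_of_dominated_convergence (fun y => ‖T y‖)
      (fun m => ((contDiff_cutoff R m).continuous.mul hTc).aestronglyMeasurable)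
      (integrableOn_ball hTc R).norm (fun m => Filter.Eventually.of_forall fun y => ?_) ?_
    · rw [norm_mul]
      refine mul_le_of_le_one_left (norm_nonneg _) ?_
      rw [cutoff, Real.norm_of_nonneg (Real.smoothTransition.nonneg _)]
      exact Real.smoothTransition.le_one _
    · filter_upwards [ae_restrict_mem measurableSet_ball] with y hy
      have hy' : 0 < R ^ 2 - ‖y‖ ^ 2 := by
        rw [mem_ball_zero_iff] at hy
        nlinarith [norm_nonneg y]
      refine tendsto_const_nhds.congr' ?_
      filter_upwards [Filter.eventually_ge_atTop ⌈1 / (R ^ 2 - ‖y‖ ^ 2)⌉₊] with m hm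
      have : 1 ≤ (m : ℝ) * (R ^ 2 - ‖y‖ ^ 2) := by
        rw [← div_le_iff₀ hy']
        exact Nat.ceil_le.1 hm
      rw [cutoff, Real.smoothTransition.one_of_one_le this, one_mul]
  have hbound : ∀ ε > 0, |∫ y in Metric.ball 0 R, T y| ≤ ε * N := by
    intro ε hε
    have hK : IsCompact (Metric.closedBall 0 R ∩ {y | ε * ‖y‖ ^ 2 ≤ |b y|}) :=
      (isCompact_closedBall 0 R).inter_right
        (isClosed_le (continuous_const.mul (continuous_norm.pow 2)) hbc.abs)
    obtain ⟨c, hc, hKc⟩ := hK.exists_forall_le' (f := fun y => R ^ 2 - ‖y‖ ^ 2) (a := 0)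
      (by fun_prop) (by
        rintro y ⟨hy1, hy2⟩
        rw [mem_closedBall_zero_iff] at hy1
        rcases hy1.lt_or_eq with h | h
        · nlinarith [norm_nonneg y]
        · have : b y = 0 := hflux y h
          rw [mem_ofPred_eq, this, abs_zero, h] at hy2
          exact absurd hy2 (not_le.2 (by positivity)))
    refine le_of_tendsto hlim.abs ?_
    filter_upwards [Filter.eventually_ge_atTop ⌈1 / c⌉₊] with m hm
    have hm' : 1 ≤ m * c := by
      rw [← div_le_iff₀ hc]
      exact Nat.ceil_le.1 hm
    have hm0 : (0 : ℝ) ≤ m := Nat.cast_nonneg m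
    rw [integral_cutoff_mul_trace hR hm0 hH hF hHc]
    have hpt : ∀ y ∈ Metric.ball (0 : EuclideanSpace ℝ (Fin n)) R,
        |cutoffWeight R m y * b y| ≤ ε * (cutoffWeight R m y * ‖y‖ ^ 2) := by
      intro y hy
      have hw := cutoffWeight_nonneg hm0 R y
      rw [abs_mul, abs_of_nonneg hw]
      by_cases hyK : ε * ‖y‖ ^ 2 ≤ |b y|
      · have h1 := hKc y ⟨Metric.ball_subset_closedBall hy, hyK⟩
        rw [cutoffWeight_eq_zero_of_one_le (hm'.trans (mul_le_mul_of_nonneg_left h1 hm0))]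
        simp
      · nlinarith [not_le.1 hyK]
    have hwc := continuous_cutoffWeight (n := n) R m
    calc |∫ y in Metric.ball 0 R, cutoffWeight R m y * b y|
        ≤ ∫ y in Metric.ball 0 R, |cutoffWeight R m y * b y| := abs_integral_le_integral_abs
      _ ≤ ∫ y in Metric.ball (0 : EuclideanSpace ℝ (Fin n)) R,
          ε * (cutoffWeight R m y * ‖y‖ ^ 2) :=
          setIntegral_mono_on (integrableOn_ball (hwc.mul hbc).abs R)
            (integrableOn_ball
              (continuous_const.mul (hwc.mul (continuous_norm.pow 2))) R) measurableSet_ball hpt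
      _ ≤ ε * N := by
          rw [integral_const_mul]
          exact mul_le_mul_of_nonneg_left (integral_cutoffWeight_le hR hm0) hε.le
  refine abs_nonpos_iff.1 (le_of_forall_pos_le_add fun ε hε => ?_)
  calc |∫ y in Metric.ball 0 R, T y| ≤ ε / (N + 1) * N := hbound _ (by positivity)
    _ ≤ 0 + ε := by
      rw [zero_add, div_mul_eq_mul_div, div_le_iff₀ (by positivity)]
      nlinarith

end Cutoff

section Robin

variable {n : ℕ}

/-- The gradient as a vector field. -/
def gradField (f : EuclideanSpace ℝ (Fin n) → ℝ) (y : EuclideanSpace ℝ (Fin n)) :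
    EuclideanSpace ℝ (Fin n) :=
  WithLp.toLp 2 fun i => fderiv ℝ f y (EuclideanSpace.single i 1)

/-- The Hessian matrix. -/
def hess (f : EuclideanSpace ℝ (Fin n) → ℝ) (y : EuclideanSpace ℝ (Fin n)) :
    Matrix (Fin n) (Fin n) ℝ :=
  Matrix.of fun i j => fderiv ℝ (fderiv ℝ f) y (EuclideanSpace.single j 1)
    (EuclideanSpace.single i 1)

/-- The Robin condition `∂_r f = f / R` on the sphere of radius `R`. -/
def IsRobin (R : ℝ) (f : EuclideanSpace ℝ (Fin n) → ℝ) : Prop :=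
  ∀ y, ‖y‖ = R → fderiv ℝ f y y = f y

lemma contDiff_gradField {f : EuclideanSpace ℝ (Fin n) → ℝ} (hf : ContDiff ℝ 2 f) :
    ContDiff ℝ 1 (gradField f) := by
  have h1 : ContDiff ℝ 1 (fderiv ℝ f) := hf.fderiv_right (by norm_num)
  rw [contDiff_euclidean]
  exact fun i => h1.clm_apply contDiff_const

lemma differentiable_fderiv {f : EuclideanSpace ℝ (Fin n) → ℝ} (hf : ContDiff ℝ 2 f) :
    Differentiable ℝ (fderiv ℝ f) :=
  (hf.fderiv_right (m := 1) (by norm_num)).differentiable (by norm_num)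

lemma jac_gradField {f : EuclideanSpace ℝ (Fin n) → ℝ} (hf : ContDiff ℝ 2 f)
    (y : EuclideanSpace ℝ (Fin n)) : jac (gradField f) y = hess f y := by
  ext i j
  have h1 : HasFDerivAt (fun z => fderiv ℝ f z (EuclideanSpace.single i 1))
      ((fderiv ℝ (fderiv ℝ f) y).flip (EuclideanSpace.single i 1)) y := by
    have := (differentiable_fderiv hf y).hasFDerivAt.clm_apply
      (hasFDerivAt_const (EuclideanSpace.single i (1 : ℝ)) y)
    simpa using this
  have h2 := (EuclideanSpace.proj (𝕜 := ℝ) i).hasFDerivAt.comp y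
    ((contDiff_gradField hf).differentiable (by norm_num) y).hasFDerivAt
  have h3 := DFunLike.congr_fun (h2.unique h1) (EuclideanSpace.single j (1 : ℝ))
  exact h3

lemma fderiv_fderiv_symm {f : EuclideanSpace ℝ (Fin n) → ℝ} (hf : ContDiff ℝ 2 f)
    (y v w : EuclideanSpace ℝ (Fin n)) :
    fderiv ℝ (fderiv ℝ f) y v w = fderiv ℝ (fderiv ℝ f) y w v :=
  hf.contDiffAt.isSymmSndFDerivAt (by simp) v w

lemma isSymm_hess {f : EuclideanSpace ℝ (Fin n) → ℝ} (hf : ContDiff ℝ 2 f)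
    (y : EuclideanSpace ℝ (Fin n)) : (hess f y).IsSymm := by
  ext i j
  exact fderiv_fderiv_symm hf _ _ _

lemma continuous_hess {f : EuclideanSpace ℝ (Fin n) → ℝ} (hf : ContDiff ℝ 2 f) :
    Continuous (hess f) := by
  have : hess f = jac (gradField f) := funext fun y => (jac_gradField hf y).symm
  rw [this]
  exact continuous_jac (contDiff_gradField hf)

lemma sum_smul_single (v : EuclideanSpace ℝ (Fin n)) :
    ∑ i, v i • EuclideanSpace.single i (1 : ℝ) = v := by
  simpa using (EuclideanSpace.basisFun (Fin n) ℝ).sum_repr v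

lemma hess_mulVec_dotProduct (f : EuclideanSpace ℝ (Fin n) → ℝ)
    (y v w : EuclideanSpace ℝ (Fin n)) :
    ⇑w ⬝ᵥ (hess f y).mulVec v = fderiv ℝ (fderiv ℝ f) y v w := by
  conv_rhs => rw [← sum_smul_single v, ← sum_smul_single w]
  simp only [map_sum, map_smul, sum_apply, smul_apply,
    smul_eq_mul, dotProduct, Matrix.mulVec, hess, Matrix.of_apply, Finset.mul_sum]
  refine Finset.sum_congr rfl fun i _ => Finset.sum_congr rfl fun j _ => by ring

lemma gradField_dotProduct (f : EuclideanSpace ℝ (Fin n) → ℝ) (y v : EuclideanSpace ℝ (Fin n)) :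
    ⇑v ⬝ᵥ ⇑(gradField f y) = fderiv ℝ f y v := by
  conv_rhs => rw [← sum_smul_single v]
  simp [gradField, dotProduct]

/-- Differentiating the Robin condition along the sphere. -/
lemma IsRobin.fderiv_fderiv_eq_zero {R : ℝ} (hR : 0 < R) {f : EuclideanSpace ℝ (Fin n) → ℝ}
    (hf : ContDiff ℝ 2 f) (hb : IsRobin R f) {y w : EuclideanSpace ℝ (Fin n)} (hy : ‖y‖ = R)
    (hw : ⟪y, w⟫ = 0) : fderiv ℝ (fderiv ℝ f) y w y = 0 := by
  by_cases hw0 : w = 0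
  · simp [hw0]
  set w' := (R / ‖w‖) • w with hw'
  have hwn : 0 < ‖w‖ := norm_pos_iff.2 hw0
  have hw'n : ‖w'‖ = R := by
    rw [hw', norm_smul, Real.norm_of_nonneg (by positivity), div_mul_cancel₀ _ hwn.ne']
  have hyw' : ⟪y, w'⟫ = 0 := by rw [hw', inner_smul_right, hw, mul_zero]
  set c : ℝ → EuclideanSpace ℝ (Fin n) := fun t => Real.cos t • y + Real.sin t • w' with hc
  have hcn : ∀ t, ‖c t‖ = R := by
    intro t
    have : ‖c t‖ ^ 2 = R ^ 2 := by
      rw [hc, norm_add_sq_real, inner_smul_left, inner_smul_right, hyw', norm_smul, norm_smul, hy,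
        hw'n, mul_pow, mul_pow, Real.norm_eq_abs, Real.norm_eq_abs, sq_abs, sq_abs]
      linear_combination R ^ 2 * Real.sin_sq_add_cos_sq t
    exact (pow_left_inj₀ (norm_nonneg _) hR.le two_ne_zero).1 this
  have hc0 : c 0 = y := by simp [hc]
  have hc' : HasDerivAt c w' 0 := by
    have := ((Real.hasDerivAt_cos 0).smul_const y).add ((Real.hasDerivAt_sin 0).smul_const w')
    exact this.congr_deriv (by simp)
  have hψ : HasFDerivAt (fun z => fderiv ℝ f z z - f z)
      ((fderiv ℝ (fderiv ℝ f) y).flip y) y := by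
    have := ((differentiable_fderiv hf y).hasFDerivAt.clm_apply (hasFDerivAt_id y)).sub
      (hf.differentiable (by norm_num) y).hasFDerivAt
    refine this.congr_fderiv ?_
    ext v
    simp
  rw [← hc0] at hψ
  have h1 := hψ.comp_hasDerivAt (0 : ℝ) hc'
  have h2 : ((fun z => fderiv ℝ f z z - f z) ∘ c) = fun _ => 0 :=
    funext fun t => sub_eq_zero.2 (hb _ (hcn t))
  rw [h2, hc0] at h1
  have h3 := h1.unique (hasDerivAt_const _ _)
  rw [ContinuousLinearMap.flip_apply, hw', map_smul, smul_apply,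
    smul_eq_mul] at h3
  exact (mul_eq_zero.1 h3).resolve_left (by positivity)

lemma dotProduct_adjugate_mulVec_eq_zero {A : Matrix (Fin n) (Fin n) ℝ} (hA : A.IsSymm)
    {y w : Fin n → ℝ} {μ : ℝ} (hy : A.mulVec y = μ • y) (hw : y ⬝ᵥ w = 0) :
    y ⬝ᵥ A.adjugate.mulVec w = 0 := by
  have key : ∀ ε : ℝ, ε ≠ -μ → y ⬝ᵥ (A + ε • 1).adjugate.mulVec w = 0 := by
    intro ε hε
    have h1 : Matrix.vecMul y (A + ε • 1) = (μ + ε) • y := by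
      rw [Matrix.vecMul_add, Matrix.vecMul_smul, Matrix.vecMul_one, add_smul, ← hy,
        ← Matrix.vecMul_transpose, hA.eq]
    have h2 : (μ + ε) * (y ⬝ᵥ (A + ε • 1).adjugate.mulVec w) = 0 := by
      rw [← smul_eq_mul, ← smul_dotProduct, ← h1, ← Matrix.dotProduct_mulVec,
        Matrix.mulVec_mulVec, Matrix.mul_adjugate, Matrix.smul_mulVec, Matrix.one_mulVec,
        dotProduct_smul, hw, smul_zero]
    exact (mul_eq_zero.1 h2).resolve_left fun h => hε (by linarith)
  have hcont : Continuous fun ε : ℝ =>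
      y ⬝ᵥ (A + ε • (1 : Matrix (Fin n) (Fin n) ℝ)).adjugate.mulVec w :=
    continuous_const.dotProduct
      (((continuous_const.add (continuous_id.smul continuous_const)).matrix_adjugate).matrix_mulVec
        continuous_const)
  have := hcont.ext_on (dense_compl_singleton (-μ)) continuous_const
    (g := fun _ => 0) fun ε hε => key ε hε
  simpa using congrFun this 0

lemma IsRobin.hess_mulVec {R : ℝ} (hR : 0 < R) {f : EuclideanSpace ℝ (Fin n) → ℝ}
    (hf : ContDiff ℝ 2 f) (hb : IsRobin R f) {y : EuclideanSpace ℝ (Fin n)} (hy : ‖y‖ = R) :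
    ∃ μ : ℝ, (hess f y).mulVec y = μ • (⇑y : Fin n → ℝ) := by
  set z : EuclideanSpace ℝ (Fin n) := WithLp.toLp 2 ((hess f y).mulVec y) with hz
  have hyy : ⟪y, y⟫ = R ^ 2 := by rw [real_inner_self_eq_norm_sq, hy]
  refine ⟨⟪y, z⟫ / R ^ 2, ?_⟩
  set w := z - (⟪y, z⟫ / R ^ 2) • y with hw
  have hyw : ⟪y, w⟫ = 0 := by
    rw [hw, inner_sub_right, inner_smul_right, hyy]
    field_simp
    ring
  have h1 : ⟪w, z⟫ = 0 := by
    have := hb.fderiv_fderiv_eq_zero hR hf hy hyw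
    rw [fderiv_fderiv_symm hf, ← hess_mulVec_dotProduct] at this
    rw [← this, hz, EuclideanSpace.inner_eq_star_dotProduct]
    simp [dotProduct_comm]
  have h2 : ⟪w, w⟫ = 0 := by
    conv_lhs => rw [hw, inner_sub_right, ← hw, inner_smul_right, real_inner_comm,
      real_inner_comm y w]
    rw [hyw, real_inner_comm, h1]
    simp
  have h3 : w = 0 := inner_self_eq_zero.1 h2
  have h4 := sub_eq_zero.1 h3
  have h5 := congrArg (fun v : EuclideanSpace ℝ (Fin n) => (⇑v : Fin n → ℝ)) h4
  simpa [hz] using h5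

/-- Green's formula for Robin functions, with respect to the cofactor matrix of a Hessian. -/
theorem integral_green {R : ℝ} (hR : 0 < R) {f g h : EuclideanSpace ℝ (Fin n) → ℝ}
    (hf : ContDiff ℝ 2 f) (hg : ContDiff ℝ 2 g) (hh : ContDiff ℝ 2 h) (hhc : HasCompactSupport h)
    (bf : IsRobin R f) (bg : IsRobin R g) (bh : IsRobin R h) :
    ∫ y in Metric.ball 0 R, (f y * ((hess h y).adjugate * hess g y).trace -
      g y * ((hess h y).adjugate * hess f y).trace) = 0 := by
  have hf1 : ContDiff ℝ 1 f := hf.of_le (by norm_num)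
  have hg1 : ContDiff ℝ 1 g := hg.of_le (by norm_num)
  have hfg := hf1.smul (contDiff_gradField hg)
  have hgf := hg1.smul (contDiff_gradField hf)
  have key := integral_trace_adjugate_jac_eq_zero_of_flux hR (contDiff_gradField hh)
    ((hfg.const_smul (1 : ℝ)).add (hgf.const_smul (-1 : ℝ))) ?_ ?_
  · rw [← key]
    refine setIntegral_congr_fun measurableSet_ball fun y _ => ?_
    have h1 := jac_smul_add_smul hfg hgf 1 (-1) y
    beta_reduce
    rw [jac_gradField hh]
    change _ = ((hess h y).adjugate * jac (fun y => (1 : ℝ) • (f y • gradField g y) +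
      (-1 : ℝ) • (g y • gradField f y)) y).trace
    change jac (fun y => (1 : ℝ) • (f y • gradField g y) +
      (-1 : ℝ) • (g y • gradField f y)) y = _ at h1
    rw [h1]
    change _ = (_ * ((1 : ℝ) • jac (fun y => f y • gradField g y) y + (-1 : ℝ) •
      jac (fun y => g y • gradField f y) y)).trace
    rw [jac_smul (hf.differentiable (by norm_num) y)
        ((contDiff_gradField hg).differentiable (by norm_num) y),
      jac_smul (hg.differentiable (by norm_num) y)
        ((contDiff_gradField hf).differentiable (by norm_num) y), jac_gradField hf,
      jac_gradField hg]
    have h2 : ((hess h y).adjugate * Matrix.vecMulVec ⇑(gradField g y) ⇑(gradField f y)).trace =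
        ((hess h y).adjugate * Matrix.vecMulVec ⇑(gradField f y) ⇑(gradField g y)).trace := by
      conv_lhs => rw [← Matrix.trace_transpose, Matrix.transpose_mul, Matrix.trace_mul_comm,
        Matrix.transpose_vecMulVec, Matrix.adjugate_transpose, (isSymm_hess hh y).eq]
    change _ = (_ * ((1 : ℝ) • (f y • hess g y +
      Matrix.vecMulVec ⇑(gradField g y) ⇑(gradField f y)) + (-1 : ℝ) • (g y • hess f y +
      Matrix.vecMulVec ⇑(gradField f y) ⇑(gradField g y)))).trace
    simp only [Matrix.mul_add, Matrix.mul_smul, Matrix.trace_add, Matrix.trace_smul, smul_eq_mul,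
      h2]
    ring
  · refine HasCompactSupport.of_support_subset_isCompact hhc.isCompact fun y hy => ?_
    by_contra hn
    refine hy ?_
    have : fderiv ℝ h y = 0 := by
      by_contra h0
      exact hn (support_fderiv_subset ℝ h0)
    ext i
    simp [gradField, this]
  · intro y hy
    rw [jac_gradField hh]
    obtain ⟨μ, hμ⟩ := bh.hess_mulVec hR hh hy
    refine dotProduct_adjugate_mulVec_eq_zero (isSymm_hess hh y) hμ ?_
    change ⇑y ⬝ᵥ ((1 : ℝ) • (f y • ⇑(gradField g y)) + (-1 : ℝ) • (g y • ⇑(gradField f y))) = 0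
    rw [dotProduct_add, dotProduct_smul, dotProduct_smul, dotProduct_smul, dotProduct_smul,
      gradField_dotProduct, gradField_dotProduct, bf y hy, bg y hy]
    simp [mul_comm]

end Robin

section Ball

variable {n : ℕ}

lemma hess_sum {f : Fin 3 → EuclideanSpace ℝ (Fin n) → ℝ} (hf : ∀ i, ContDiff ℝ 2 (f i))
    (v : Fin 3 → ℝ) (y : EuclideanSpace ℝ (Fin n)) :
    hess (fun z => ∑ i, v i * f i z) y = ∑ i, v i • hess (f i) y := by
  have h1 : fderiv ℝ (fun z => ∑ i, v i * f i z) = fun z => ∑ i, v i • fderiv ℝ (f i) z := by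
    ext1 z
    exact (HasFDerivAt.fun_sum fun i _ =>
      ((hf i).differentiable (by norm_num) z).hasFDerivAt.const_mul (v i)).fderiv
  have h2 := (HasFDerivAt.fun_sum (u := Finset.univ) fun i _ =>
    (differentiable_fderiv (hf i) y).hasFDerivAt.const_smul (v i)).fderiv
  ext p q
  simp only [hess, Matrix.of_apply, Matrix.sum_apply, Matrix.smul_apply, h1]
  change fderiv ℝ (fun z => ∑ i, v i • fderiv ℝ (f i) z) y = _ at h2
  rw [h2]
  simp [sum_apply]

lemma isRobin_sum {R : ℝ} {f : Fin 3 → EuclideanSpace ℝ (Fin n) → ℝ}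
    (hf : ∀ i, ContDiff ℝ 2 (f i)) (hb : ∀ i, IsRobin R (f i)) (v : Fin 3 → ℝ) :
    IsRobin R fun z => ∑ i, v i * f i z := by
  intro y hy
  rw [(HasFDerivAt.fun_sum fun i _ =>
      ((hf i).differentiable (by norm_num) y).hasFDerivAt.const_mul (v i)).fderiv]
  simp only [sum_apply, smul_apply, smul_eq_mul]
  exact Finset.sum_congr rfl fun i _ => by rw [hb i y hy]

/-- The Hessians of a triple of functions as matrices of continuous functions. -/
def contHess (f : Fin 3 → EuclideanSpace ℝ (Fin n) → ℝ) (hf : ∀ i, ContDiff ℝ 2 (f i)) :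
    Fin 3 → Matrix (Fin n) (Fin n) C(EuclideanSpace ℝ (Fin n), ℝ) :=
  fun i => contMatrix (hess (f i)) (continuous_hess (hf i))

lemma coeff_pencil_contHess (f : Fin 3 → EuclideanSpace ℝ (Fin n) → ℝ)
    (hf : ∀ i, ContDiff ℝ 2 (f i)) (m : Fin 3 →₀ ℕ) (y : EuclideanSpace ℝ (Fin n)) :
    (pencil (contHess f hf)).coeff m y = (pencil fun i => hess (f i) y).coeff m :=
  coeff_pencil_apply _ _ _

/-- Symmetry of the mixed discriminant integrals in their function arguments. -/
theorem integral_coeff_pencil {R : ℝ} (hR : 0 < R) {f : Fin 3 → EuclideanSpace ℝ (Fin n) → ℝ}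
    (hf : ∀ i, ContDiff ℝ 2 (f i)) (hc : ∀ i, HasCompactSupport (f i))
    (hb : ∀ i, IsRobin R (f i)) (a b : ℕ) :
    ∫ y in Metric.ball 0 R,
      (2 * f 1 y * (pencil fun i => hess (f i) y).coeff (expo a b 2) -
        (b + 1) * f 2 y * (pencil fun i => hess (f i) y).coeff (expo a (b + 1) 1)) = 0 := by
  set D := pencil (contHess f hf) with hD
  set F : Fin 3 → C(EuclideanSpace ℝ (Fin n), ℝ) := fun i => ⟨f i, (hf i).continuous⟩
  set W := MvPolynomial.C (F 1) * MvPolynomial.pderiv 2 D -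
    MvPolynomial.C (F 2) * MvPolynomial.pderiv 1 D with hW
  have hev : ∀ (v : Fin 3 → ℝ) (i : Fin 3) (y : EuclideanSpace ℝ (Fin n)),
      (MvPolynomial.eval (fun j => algebraMap ℝ C(EuclideanSpace ℝ (Fin n), ℝ) (v j))
        (MvPolynomial.pderiv i D)) y =
      ((hess (fun z => ∑ i, v i * f i z) y).adjugate * hess (f i) y).trace := by
    intro v i y
    rw [hD, eval_pderiv_pencil, evalAt_trace_adjugate_mul, hess_sum hf]
    congr 3
  have hW0 : coeffMap (ballIntegral n R) W = 0 := by
    refine MvPolynomial.funext fun v => ?_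
    rw [eval_coeffMap, map_zero, ballIntegral_apply, hW]
    have hs : ContDiff ℝ 2 fun z => ∑ i, v i * f i z :=
      ContDiff.sum fun i _ => contDiff_const.mul (hf i)
    have hsc : HasCompactSupport fun z => ∑ i, v i * f i z := by
      simp only [Fin.sum_univ_three]
      exact ((hc 0).mul_left.add (hc 1).mul_left).add (hc 2).mul_left
    rw [← integral_green hR (hf 1) (hf 2) hs hsc (hb 1) (hb 2) (isRobin_sum hf hb v)]
    refine setIntegral_congr_fun measurableSet_ball fun y _ => ?_
    simp only [map_sub, map_mul, MvPolynomial.eval_C, ContinuousMap.sub_apply,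
      ContinuousMap.mul_apply, hev]
    rfl
  have h1 := congrArg (MvPolynomial.coeff (expo a b 1)) hW0
  rw [coeff_coeffMap, MvPolynomial.coeff_zero, ballIntegral_apply] at h1
  rw [← h1]
  refine setIntegral_congr_fun measurableSet_ball fun y _ => ?_
  have e2 : expo a b 1 + Finsupp.single 2 1 = expo a b 2 := by
    ext i; fin_cases i <;> simp [expo]
  have e1 : expo a b 1 + Finsupp.single 1 1 = expo a (b + 1) 1 := by
    ext i; fin_cases i <;> simp [expo]
  have c2 : expo a b 1 2 = 1 := by simp [expo]
  have c1 : expo a b 1 1 = b := by simp [expo]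
  have hnat : ∀ m : ℕ, (m : C(EuclideanSpace ℝ (Fin n), ℝ)) y = m :=
    fun m => map_natCast (evalAt y) m
  simp only [hW, MvPolynomial.coeff_sub, MvPolynomial.coeff_C_mul, MvPolynomial.coeff_pderiv, e1,
    e2, c1, c2, ContinuousMap.sub_apply, ContinuousMap.mul_apply, ContinuousMap.add_apply, hnat, hD,
    coeff_pencil_contHess, ContinuousMap.one_apply]
  change _ = f 1 y * _ - f 2 y * _
  push_cast
  ring

/-- A Robin function annihilated by the linearized operator has vanishing Hessian. -/
theorem hess_eq_zero_of_coeff_pencil {R : ℝ} (hR : 0 < R) {k : ℕ} (hk : 2 ≤ k) (hkn : k ≤ n)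
    {f : Fin 3 → EuclideanSpace ℝ (Fin n) → ℝ}
    (hf : ∀ i, ContDiff ℝ 2 (f i)) (hc : ∀ i, HasCompactSupport (f i))
    (hb : ∀ i, IsRobin R (f i)) (hpos : ∀ y ∈ Metric.ball 0 R, 0 < f 1 y)
    (h0 : ∀ y ∈ Metric.ball 0 R, (hess (f 0) y).PosDef)
    (h1 : ∀ y ∈ Metric.ball 0 R, (hess (f 1) y).PosDef)
    (hker : ∀ y ∈ Metric.ball 0 R,
      (pencil fun i => hess (f i) y).coeff (expo (n - k) (k - 1) 1) = 0) :
    ∀ y ∈ Metric.ball 0 R, hess (f 2) y = 0 := by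
  have key := integral_coeff_pencil hR hf hc hb (n - k) (k - 2)
  have hk1 : k - 2 + 1 = k - 1 := by omega
  rw [hk1] at key
  have hpen : ∀ y, (pencil fun i => hess (f i) y) =
      pencil ![hess (f 0) y, hess (f 1) y, hess (f 2) y] := fun y =>
    congrArg pencil (by ext i : 1; fin_cases i <;> rfl)
  have hg : ∀ y ∈ Metric.ball 0 R,
      (pencil fun i => hess (f i) y).coeff (expo (n - k) (k - 2) 2) ≤ 0 ∧
      ((pencil fun i => hess (f i) y).coeff (expo (n - k) (k - 2) 2) = 0 → hess (f 2) y = 0) := by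
    intro y hy
    have := hker y hy
    rw [hpen] at this ⊢
    exact coeff_pencil_two_nonpos (h0 y hy) (h1 y hy) (isSymm_hess (hf 2) y) hk hkn this
  have hcont : Continuous fun y =>
      f 1 y * (pencil fun i => hess (f i) y).coeff (expo (n - k) (k - 2) 2) := by
    have : (fun y => (pencil fun i => hess (f i) y).coeff (expo (n - k) (k - 2) 2)) =
        (pencil (contHess f hf)).coeff (expo (n - k) (k - 2) 2) :=
      funext fun y => (coeff_pencil_contHess f hf _ y).symm
    exact (hf 1).continuous.mul (this ▸ ContinuousMap.continuous _)
  have hcont' : Continuous fun y =>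
      -(f 1 y * (pencil fun i => hess (f i) y).coeff (expo (n - k) (k - 2) 2)) := hcont.neg
  have hint : ∫ y in Metric.ball 0 R,
      -(f 1 y * (pencil fun i => hess (f i) y).coeff (expo (n - k) (k - 2) 2)) = 0 := by
    have e : ∫ y in Metric.ball 0 R,
        (-2) * -(f 1 y * (pencil fun i => hess (f i) y).coeff (expo (n - k) (k - 2) 2)) = 0 := by
      rw [← key]
      refine setIntegral_congr_fun measurableSet_ball fun y hy => ?_
      rw [hker y hy]
      ring
    rw [integral_const_mul] at e
    exact (mul_eq_zero.1 e).resolve_left (by norm_num)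
  rw [setIntegral_eq_zero_iff_of_nonneg_ae ?_ (integrableOn_ball hcont' R)] at hint
  · intro y hy
    have hz := Measure.eqOn_open_of_ae_eq hint Metric.isOpen_ball hcont'.continuousOn
      continuousOn_const hy
    refine (hg y hy).2 ?_
    have hz' : f 1 y * (pencil fun i => hess (f i) y).coeff (expo (n - k) (k - 2) 2) = 0 :=
      neg_eq_zero.1 hz
    exact (mul_eq_zero.1 hz').resolve_left (hpos y hy).ne'
  · filter_upwards [ae_restrict_mem measurableSet_ball] with y hy
    exact neg_nonneg.2 (mul_nonpos_of_nonneg_of_nonpos (hpos y hy).le (hg y hy).1)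

end Ball

section Flat

variable {n : ℕ}

lemma hess_congr {f g : EuclideanSpace ℝ (Fin n) → ℝ} {y : EuclideanSpace ℝ (Fin n)}
    (h : f =ᶠ[nhds y] g) : hess f y = hess g y := by
  unfold hess
  rw [h.fderiv.fderiv_eq]

lemma fderiv_fderiv_eq_zero_of_hess {f : EuclideanSpace ℝ (Fin n) → ℝ}
    {y : EuclideanSpace ℝ (Fin n)} (h : hess f y = 0) : fderiv ℝ (fderiv ℝ f) y = 0 := by
  ext v w
  rw [← hess_mulVec_dotProduct, h]
  simp

lemma norm_smul_lt {R : ℝ} {y : EuclideanSpace ℝ (Fin n)} (hR : 0 < R) (hy : ‖y‖ ≤ R) {t : ℝ}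
    (ht : t ∈ Ioo (0 : ℝ) 1) : t • y ∈ Metric.ball (0 : EuclideanSpace ℝ (Fin n)) R := by
  rw [mem_ball_zero_iff, norm_smul, Real.norm_of_nonneg ht.1.le]
  nlinarith [ht.1, ht.2, norm_nonneg y]

/-- A Robin function with vanishing Hessian is linear. -/
lemma IsRobin.eq_fderiv_zero [NeZero n] {R : ℝ} (hR : 0 < R) {f : EuclideanSpace ℝ (Fin n) → ℝ}
    (hf : ContDiff ℝ 2 f) (hb : IsRobin R f) (h : ∀ y ∈ Metric.ball 0 R, hess f y = 0) :
    ∀ y ∈ Metric.closedBall 0 R, f y = fderiv ℝ f 0 y := by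
  have h0 : (0 : EuclideanSpace ℝ (Fin n)) ∈ Metric.ball 0 R := Metric.mem_ball_self hR
  have hd : Differentiable ℝ f := hf.differentiable (by norm_num)
  have hcl : closure (Metric.ball (0 : EuclideanSpace ℝ (Fin n)) R) = Metric.closedBall 0 R :=
    closure_ball _ hR.ne'
  have h1 : EqOn (fderiv ℝ f) (fun _ => fderiv ℝ f 0) (Metric.closedBall 0 R) := by
    rw [← hcl]
    refine EqOn.closure (fun y hy => ?_) (differentiable_fderiv hf).continuous continuous_const
    exact Metric.isOpen_ball.is_const_of_fderiv_eq_zero (𝕜 := ℝ) Metric.isPreconnected_ball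
      (differentiable_fderiv hf).differentiableOn
      (fun z hz => fderiv_fderiv_eq_zero_of_hess (h z hz)) hy h0
  have h2 : EqOn f (fun y => fderiv ℝ f 0 y + f 0) (Metric.closedBall 0 R) := by
    rw [← hcl]
    refine EqOn.closure ?_ hd.continuous (by fun_prop)
    refine Metric.isOpen_ball.eqOn_of_fderiv_eq (𝕜 := ℝ) Metric.isPreconnected_ball
      hd.differentiableOn (by fun_prop) (fun y hy => ?_) h0 (by simp)
    rw [fderiv_add_const, ContinuousLinearMap.fderiv]
    exact h1 (Metric.ball_subset_closedBall hy)
  obtain ⟨y₀, hy₀⟩ := exists_norm_eq (EuclideanSpace ℝ (Fin n)) hR.le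
  have hy₀' : y₀ ∈ Metric.closedBall 0 R := mem_closedBall_zero_iff.2 hy₀.le
  have h3 := hb y₀ hy₀
  rw [h1 hy₀', h2 hy₀'] at h3
  intro y hy
  rw [h2 hy]
  linarith

lemma hasDerivAt_ray {f : EuclideanSpace ℝ (Fin n) → ℝ} (hf : ContDiff ℝ 2 f)
    (y : EuclideanSpace ℝ (Fin n)) (t : ℝ) :
    HasDerivAt (fun t : ℝ => f (t • y)) (fderiv ℝ f (t • y) y) t ∧
      HasDerivAt (fun t : ℝ => fderiv ℝ f (t • y) y)
        (fderiv ℝ (fderiv ℝ f) (t • y) y y) t := by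
  have hc : HasDerivAt (fun t : ℝ => t • y) y t :=
    ((hasDerivAt_id t).smul_const y).congr_deriv (one_smul ℝ y)
  have h1 := (hf.differentiable (by norm_num) (t • y)).hasFDerivAt
  have h2 : HasFDerivAt (fun z => fderiv ℝ f z y) ((fderiv ℝ (fderiv ℝ f) (t • y)).flip y)
      (t • y) :=
    ((differentiable_fderiv hf (t • y)).hasFDerivAt.clm_apply (hasFDerivAt_const y _)).congr_fderiv
      (by simp)
  have h3 := h2.comp_hasDerivAt t hc
  exact ⟨h1.comp_hasDerivAt t hc, h3⟩

/-- A convex Robin function lies above its tangent plane at the origin. -/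
lemma IsRobin.sub_fderiv_zero_pos [NeZero n] {R : ℝ} (hR : 0 < R)
    {f : EuclideanSpace ℝ (Fin n) → ℝ} (hf : ContDiff ℝ 2 f) (hb : IsRobin R f)
    (h : ∀ y ∈ Metric.ball 0 R, (hess f y).PosDef) :
    ∀ y ∈ Metric.ball 0 R, 0 < f y - fderiv ℝ f 0 y := by
  have hpos : ∀ y ∈ Metric.ball 0 R, ∀ v ≠ 0, 0 < fderiv ℝ (fderiv ℝ f) y v v := by
    intro y hy v hv
    rw [← hess_mulVec_dotProduct]
    have := (h y hy).dotProduct_mulVec_pos (x := ⇑v) (fun h0 => hv (by ext i; exact congrFun h0 i))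
    simpa using this
  have hf0 : 0 < f 0 := by
    obtain ⟨y₀, hy₀⟩ := exists_norm_eq (EuclideanSpace ℝ (Fin n)) hR.le
    have hy₀' : y₀ ≠ 0 := fun h0 => by simp [h0] at hy₀; linarith
    have hd : ∀ t, HasDerivAt (fun t : ℝ => t * fderiv ℝ f (t • y₀) y₀ - f (t • y₀))
        (t * fderiv ℝ (fderiv ℝ f) (t • y₀) y₀ y₀) t := by
      intro t
      refine (((hasDerivAt_id t).mul (hasDerivAt_ray hf y₀ t).2).sub
        (hasDerivAt_ray hf y₀ t).1).congr_deriv ?_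
      simp
    have hm : StrictMonoOn (fun t : ℝ => t * fderiv ℝ f (t • y₀) y₀ - f (t • y₀)) (Icc 0 1) := by
      refine strictMonoOn_of_deriv_pos (convex_Icc 0 1)
        (fun t _ => (hd t).continuousAt.continuousWithinAt) fun t ht => ?_
      rw [interior_Icc] at ht
      rw [(hd t).deriv]
      exact mul_pos ht.1 (hpos _ (norm_smul_lt hR hy₀.le ht) _ hy₀')
    have := hm (left_mem_Icc.2 zero_le_one) (right_mem_Icc.2 zero_le_one) zero_lt_one
    simp only [zero_mul, zero_smul, one_mul, one_smul, hb y₀ hy₀] at this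
    linarith
  intro y hy
  by_cases hy0 : y = 0
  · simpa [hy0] using hf0
  have hyR : ‖y‖ ≤ R := (mem_ball_zero_iff.1 hy).le
  have hm1 : StrictMonoOn (fun t : ℝ => fderiv ℝ f (t • y) y) (Icc 0 1) := by
    refine strictMonoOn_of_deriv_pos (convex_Icc 0 1)
      (fun t _ => (hasDerivAt_ray hf y t).2.continuousAt.continuousWithinAt) fun t ht => ?_
    rw [interior_Icc] at ht
    rw [(hasDerivAt_ray hf y t).2.deriv]
    exact hpos _ (norm_smul_lt hR hyR ht) _ hy0
  have hd : ∀ t, HasDerivAt (fun t : ℝ => f (t • y) - t * fderiv ℝ f 0 y)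
      (fderiv ℝ f (t • y) y - fderiv ℝ f 0 y) t := by
    intro t
    refine ((hasDerivAt_ray hf y t).1.sub
      ((hasDerivAt_id t).mul_const (fderiv ℝ f 0 y))).congr_deriv ?_
    simp
  have hm : StrictMonoOn (fun t : ℝ => f (t • y) - t * fderiv ℝ f 0 y) (Icc 0 1) := by
    refine strictMonoOn_of_deriv_pos (convex_Icc 0 1)
      (fun t _ => (hd t).continuousAt.continuousWithinAt) fun t ht => ?_
    rw [interior_Icc] at ht
    rw [(hd t).deriv]
    have := hm1 (left_mem_Icc.2 zero_le_one) (Ioo_subset_Icc_self ht) ht.1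
    simp only [zero_smul] at this
    linarith
  have := hm (left_mem_Icc.2 zero_le_one) (right_mem_Icc.2 zero_le_one) zero_lt_one
  simp only [zero_smul, one_smul, zero_mul, one_mul, sub_zero] at this
  linarith

end Flat

section Kernel

variable {n : ℕ}

lemma contDiff_mul_of_tsupport_subset {U : Set (EuclideanSpace ℝ (Fin n))} (hU : IsOpen U)
    {χ f : EuclideanSpace ℝ (Fin n) → ℝ} (hχ : ContDiff ℝ 2 χ) (hs : tsupport χ ⊆ U)
    (hf : ContDiffOn ℝ 2 f U) : ContDiff ℝ 2 fun y => χ y * f y := by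
  rw [contDiff_iff_contDiffAt]
  intro y
  by_cases hy : y ∈ U
  · exact hχ.contDiffAt.mul (hf.contDiffAt (hU.mem_nhds hy))
  · have h0 : (fun y => χ y * f y) =ᶠ[nhds y] fun _ => 0 := by
      filter_upwards [notMem_tsupport_iff_eventuallyEq.1 fun h => hy (hs h)] with z hz
      simp [hz]
    exact contDiffAt_const.congr_of_eventuallyEq h0

lemma hess_eq_zero_of_two_le [NeZero n] {R : ℝ} (hR : 0 < R) {k : ℕ} (hk : 2 ≤ k) (hkn : k ≤ n)
    {l s υ : EuclideanSpace ℝ (Fin n) → ℝ}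
    (hl : ContDiff ℝ 2 l) (hs : ContDiff ℝ 2 s) (hυ : ContDiff ℝ 2 υ)
    (cl : HasCompactSupport l) (cs : HasCompactSupport s) (cυ : HasCompactSupport υ)
    (bl : IsRobin R l) (bs : IsRobin R s) (bυ : IsRobin R υ)
    (pl : ∀ y ∈ Metric.ball 0 R, (hess l y).PosDef)
    (ps : ∀ y ∈ Metric.ball 0 R, (hess s y).PosDef)
    (hker : ∀ y ∈ Metric.ball 0 R,
      (pencil ![hess l y, hess s y, hess υ y]).coeff (expo (n - k) (k - 1) 1) = 0) :
    ∀ y ∈ Metric.ball 0 R, hess υ y = 0 := by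
  obtain ⟨χ, hχ, hχc, -, hχ1⟩ := exists_bump (n := n) hR isOpen_univ (subset_univ _)
  set L := fderiv ℝ s 0 with hL
  set s' : EuclideanSpace ℝ (Fin n) → ℝ := fun y => s y - χ y * L y with hs'
  have he : ∀ y ∈ Metric.closedBall 0 R, s' =ᶠ[nhds y] fun z => s z - L z := by
    intro y hy
    filter_upwards [hχ1 y hy] with z hz
    simp [hs', hz]
  have hd : ∀ y, HasFDerivAt (fun z => s z - L z) (fderiv ℝ s y - L) y := fun y =>
    (hs.differentiable (by norm_num) y).hasFDerivAt.sub L.hasFDerivAt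
  have hh : ∀ y ∈ Metric.ball 0 R, hess s' y = hess s y := by
    intro y hy
    rw [hess_congr (he y (Metric.ball_subset_closedBall hy))]
    have : fderiv ℝ (fun z => s z - L z) = fun z => fderiv ℝ s z - L :=
      funext fun z => (hd z).fderiv
    unfold hess
    rw [this, fderiv_sub_const]
  have hmem : ∀ y ∈ Metric.ball 0 R, ![hess l y, hess s' y, hess υ y] =
      fun i => hess (![l, s', υ] i) y := by
    intro y _
    ext i : 1
    fin_cases i <;> rfl
  refine hess_eq_zero_of_coeff_pencil hR hk hkn (f := ![l, s', υ]) ?_ ?_ ?_ ?_ pl ?_ ?_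
  · intro i
    fin_cases i
    · exact hl
    · exact hs.sub (hχ.mul L.contDiff)
    · exact hυ
  · intro i
    fin_cases i
    · exact cl
    · exact cs.sub hχc.mul_right
    · exact cυ
  · intro i
    fin_cases i
    · exact bl
    · intro y hy
      have hy' := he y (mem_closedBall_zero_iff.2 hy.le)
      change fderiv ℝ s' y y = s' y
      rw [hy'.fderiv_eq, hy'.eq_of_nhds, (hd y).fderiv, sub_apply, bs y hy]
    · exact bυ
  · intro y hy
    change 0 < s' y
    rw [(he y (Metric.ball_subset_closedBall hy)).eq_of_nhds]
    exact bs.sub_fderiv_zero_pos hR hs ps y hy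
  · intro y hy
    change (hess s' y).PosDef
    rw [hh y hy]
    exact ps y hy
  · intro y hy
    rw [← hmem y hy, hh y hy]
    exact hker y hy

lemma eq_fderiv_zero_of_coeff_pencil [NeZero n] {R : ℝ} (hR : 0 < R) {k : ℕ} (hk : 1 ≤ k)
    (hkn : k ≤ n) {l s υ : EuclideanSpace ℝ (Fin n) → ℝ}
    (hl : ContDiff ℝ 2 l) (hs : ContDiff ℝ 2 s) (hυ : ContDiff ℝ 2 υ)
    (cl : HasCompactSupport l) (cs : HasCompactSupport s) (cυ : HasCompactSupport υ)
    (bl : IsRobin R l) (bs : IsRobin R s) (bυ : IsRobin R υ)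
    (pl : ∀ y ∈ Metric.ball 0 R, (hess l y).PosDef)
    (ps : ∀ y ∈ Metric.ball 0 R, (hess s y).PosDef)
    (hker : ∀ y ∈ Metric.ball 0 R,
      (pencil ![hess l y, hess s y, hess υ y]).coeff (expo (n - k) (k - 1) 1) = 0) :
    ∀ y ∈ Metric.closedBall 0 R, υ y = fderiv ℝ υ 0 y := by
  refine bυ.eq_fderiv_zero hR hυ ?_
  rcases hk.lt_or_eq with hk2 | rfl
  · exact hess_eq_zero_of_two_le hR hk2 hkn hl hs hυ cl cs cυ bl bs bυ pl ps hker
  rcases hkn.lt_or_eq with hn2 | rfl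
  · exact hess_eq_zero_of_two_le hR le_rfl hn2 hl hl hυ cl cl cυ bl bl bυ pl pl fun y hy =>
      coeff_pencil_self (pl y hy) (ps y hy) hn2 (hker y hy)
  · intro y hy
    have h := hker y hy
    have e : pencil ![hess l y, hess s y, hess υ y] =
        MvPolynomial.monomial (expo 1 0 0) (hess l y 0 0) +
          MvPolynomial.monomial (expo 0 1 0) (hess s y 0 0) +
          MvPolynomial.monomial (expo 0 0 1) (hess υ y 0 0) := by
      refine MvPolynomial.funext fun v => ?_
      rw [eval_pencil]
      simp [Fin.sum_univ_three, MvPolynomial.eval_monomial, expo, Fin.prod_univ_three, mul_comm]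
    rw [e] at h
    simp only [MvPolynomial.coeff_add, MvPolynomial.coeff_monomial, expo_inj] at h
    ext i j
    fin_cases i
    fin_cases j
    simpa using h

/-- Rigidity of the linearized mixed Hessian equation on a ball with Robin boundary condition. -/
theorem exists_eq_apply_of_coeff_pencil [NeZero n] {R : ℝ} (hR : 0 < R) {k : ℕ} (hk : 1 ≤ k)
    (hkn : k ≤ n) {U : Set (EuclideanSpace ℝ (Fin n))} (hU : IsOpen U)
    (hRU : Metric.closedBall 0 R ⊆ U) {l s υ : EuclideanSpace ℝ (Fin n) → ℝ}
    (hl : ContDiffOn ℝ 2 l U) (hs : ContDiffOn ℝ 2 s U) (hυ : ContDiffOn ℝ 2 υ U)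
    (bl : IsRobin R l) (bs : IsRobin R s) (bυ : IsRobin R υ)
    (pl : ∀ y ∈ Metric.ball 0 R, (hess l y).PosDef)
    (ps : ∀ y ∈ Metric.ball 0 R, (hess s y).PosDef)
    (hker : ∀ y ∈ Metric.ball 0 R,
      (pencil ![hess l y, hess s y, hess υ y]).coeff (expo (n - k) (k - 1) 1) = 0) :
    ∃ L : EuclideanSpace ℝ (Fin n) →L[ℝ] ℝ, ∀ y ∈ Metric.closedBall 0 R, υ y = L y := by
  obtain ⟨χ, hχ, hχc, hχU, hχ1⟩ := exists_bump hR hU hRU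
  have he : ∀ f : EuclideanSpace ℝ (Fin n) → ℝ, ∀ y ∈ Metric.closedBall 0 R,
      (fun z => χ z * f z) =ᶠ[nhds y] f := by
    intro f y hy
    filter_upwards [hχ1 y hy] with z hz
    simp [hz]
  have hh : ∀ f : EuclideanSpace ℝ (Fin n) → ℝ, ∀ y ∈ Metric.ball 0 R,
      hess (fun z => χ z * f z) y = hess f y := fun f y hy =>
    hess_congr (he f y (Metric.ball_subset_closedBall hy))
  have hb : ∀ f : EuclideanSpace ℝ (Fin n) → ℝ, IsRobin R f → IsRobin R fun z => χ z * f z := by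
    intro f hf y hy
    have hy' := he f y (mem_closedBall_zero_iff.2 hy.le)
    rw [hy'.fderiv_eq, hf y hy]
    exact hy'.eq_of_nhds.symm
  have key := eq_fderiv_zero_of_coeff_pencil hR hk hkn
    (contDiff_mul_of_tsupport_subset hU hχ hχU hl) (contDiff_mul_of_tsupport_subset hU hχ hχU hs)
    (contDiff_mul_of_tsupport_subset hU hχ hχU hυ) hχc.mul_right hχc.mul_right hχc.mul_right
    (hb l bl) (hb s bs) (hb υ bυ) (fun y hy => by rw [hh l y hy]; exact pl y hy)
    (fun y hy => by rw [hh s y hy]; exact ps y hy)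
    (fun y hy => by rw [hh l y hy, hh s y hy, hh υ y hy]; exact hker y hy)
  exact ⟨_, fun y hy => (he υ y hy).eq_of_nhds.symm.trans (key y hy)⟩

end Kernel

section Symbol

open Polynomial in
lemma charpoly_add_smul {N : ℕ} (A B : Matrix (Fin N) (Fin N) ℝ) (t : ℝ) :
    (A + t • B).charpoly =
      MvPolynomial.aeval ![(X : ℝ[X]), -1, -C t] (pencil ![1, A, B]) := by
  rw [Matrix.charpoly, pencil, AlgHom.map_det]
  congr 1
  ext1 i j
  simp only [AlgHom.mapMatrix_apply, Matrix.map_apply, Matrix.smul_apply,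
    Fin.sum_univ_three, smul_eq_mul, map_add, map_mul, MvPolynomial.aeval_X,
    Matrix.charmatrix_apply,
    Matrix.cons_val_zero, Matrix.cons_val_one, Matrix.cons_val, MvPolynomial.aeval_C,
    Matrix.add_apply, Matrix.one_apply, Matrix.diagonal_apply, Polynomial.algebraMap_eq]
  split_ifs <;> simp <;> ring

lemma isHomogeneous_pencil {N : ℕ} {R : Type*} [CommRing R]
    (A : Fin 3 → Matrix (Fin N) (Fin N) R) : (pencil A).IsHomogeneous N := by
  rw [pencil, Matrix.det_apply]
  refine MvPolynomial.IsHomogeneous.sum _ _ _ fun σ _ => ?_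
  rw [Units.smul_def]
  refine (MvPolynomial.homogeneousSubmodule (Fin 3) R N).toAddSubgroup.zsmul_mem ?_ _
  change MvPolynomial.IsHomogeneous _ N
  have : ∀ i, MvPolynomial.IsHomogeneous ((∑ j, (MvPolynomial.X j : MvPolynomial (Fin 3) R) •
      (A j).map (MvPolynomial.C (σ := Fin 3))) (σ i) i) 1 := by
    intro i
    rw [Matrix.sum_apply]
    refine MvPolynomial.IsHomogeneous.sum _ _ _ fun j _ => ?_
    simpa using (MvPolynomial.isHomogeneous_X R j).mul
      (MvPolynomial.isHomogeneous_C (Fin 3) (A j (σ i) i))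
  simpa using MvPolynomial.IsHomogeneous.prod Finset.univ _ (fun _ => 1) fun i _ => this i

open Polynomial in
lemma neg_one_pow_mul_coeff_charpoly {N k : ℕ} (hkN : k ≤ N) (A B : Matrix (Fin N) (Fin N) ℝ)
    (t : ℝ) :
    (-1) ^ k * (A + t • B).charpoly.coeff (N - k) = ∑ d ∈ (pencil ![1, A, B]).support,
      if d 0 = N - k then (pencil ![1, A, B]).coeff d * t ^ d 2 else 0 := by
  rw [charpoly_add_smul, MvPolynomial.aeval_def, MvPolynomial.eval₂_eq', Polynomial.finsetSum_coeff,
    Finset.mul_sum]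
  refine Finset.sum_congr rfl fun d hd => ?_
  have hdeg : d 0 + d 1 + d 2 = N := by
    have := isHomogeneous_pencil ![1, A, B] (MvPolynomial.mem_support_iff.1 hd)
    rw [Finsupp.weight_apply, Finsupp.sum_fintype _ _ (by simp)] at this
    simpa [Fin.sum_univ_three] using this
  have e : (algebraMap ℝ ℝ[X]) (MvPolynomial.coeff d (pencil ![1, A, B])) *
      ∏ i, ![(X : ℝ[X]), -1, -C t] i ^ d i =
      C (MvPolynomial.coeff d (pencil ![1, A, B]) * ((-1) ^ d 1 * (-t) ^ d 2)) * X ^ d 0 := by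
    simp [Fin.prod_univ_three]
    ring
  rw [e, Polynomial.coeff_C_mul_X_pow]
  by_cases h : d 0 = N - k
  · have hk : k = d 1 + d 2 := by omega
    rw [if_pos h.symm, if_pos h, hk, neg_pow t, pow_add]
    have h1 : ((-1 : ℝ) ^ d 1) * (-1) ^ d 1 = 1 := by rw [← mul_pow]; simp
    have h2 : ((-1 : ℝ) ^ d 2) * (-1) ^ d 2 = 1 := by rw [← mul_pow]; simp
    linear_combination (MvPolynomial.coeff d (pencil ![1, A, B]) * t ^ d 2) *
      ((-1) ^ d 2 * (-1) ^ d 2 * h1 + h2)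
  · rw [if_neg (Ne.symm h), if_neg h, mul_zero]

/-- The linearisation of `σ_k` at `A` in the direction `B` is a coefficient of the pencil. -/
lemma deriv_coeff_charpoly {N k : ℕ} (hk : 1 ≤ k) (hkN : k ≤ N)
    (A B : Matrix (Fin N) (Fin N) ℝ) :
    deriv (fun t : ℝ => (-1) ^ k * (A + t • B).charpoly.coeff (N - k)) 0 =
      (pencil ![1, A, B]).coeff (expo (N - k) (k - 1) 1) := by
  simp_rw [neg_one_pow_mul_coeff_charpoly hkN]
  have hd : HasDerivAt (fun t : ℝ => ∑ d ∈ (pencil ![1, A, B]).support,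
      if d 0 = N - k then (pencil ![1, A, B]).coeff d * t ^ d 2 else 0)
      (∑ d ∈ (pencil ![1, A, B]).support,
        if d 0 = N - k then (pencil ![1, A, B]).coeff d * (d 2 * 0 ^ (d 2 - 1)) else 0) 0 := by
    refine HasDerivAt.fun_sum fun d _ => ?_
    split_ifs
    · exact (hasDerivAt_pow _ _).const_mul _
    · exact hasDerivAt_const _ _
  rw [hd.deriv, Finset.sum_eq_single (expo (N - k) (k - 1) 1)]
  · simp [expo]
  · intro d hdm hne
    split_ifs with h0
    · rcases lt_trichotomy (d 2) 1 with h | h | h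
      · simp [Nat.lt_one_iff.1 h]
      · refine absurd ?_ hne
        have hdeg := isHomogeneous_pencil ![1, A, B] (MvPolynomial.mem_support_iff.1 hdm)
        rw [Finsupp.weight_apply, Finsupp.sum_fintype _ _ (by simp)] at hdeg
        simp [Fin.sum_univ_three] at hdeg
        ext i
        fin_cases i <;> simp [expo] <;> omega
      · rw [zero_pow (by omega)]
        simp
    · rfl
  · intro h
    rw [MvPolynomial.notMem_support_iff.1 h]
    simp

/-- A symmetric matrix with a unit null vector is determined by its leading block, and so is its
characteristic polynomial. -/
lemma sq_mul_det_smul_one_add {n : ℕ} {M : Matrix (Fin (n + 1)) (Fin (n + 1)) ℝ}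
    (hM : M.IsSymm) {u : Fin (n + 1) → ℝ} (hMu : M.mulVec u = 0) (hu : ∑ i, u i ^ 2 = 1) (x : ℝ) :
    u (Fin.last n) ^ 2 * (x • (1 : Matrix (Fin (n + 1)) (Fin (n + 1)) ℝ) + M).det =
      x * (x • (1 - Matrix.vecMulVec (fun i => u (Fin.castSucc i)) fun i => u (Fin.castSucc i)) +
        M.submatrix Fin.castSucc Fin.castSucc).det := by
  set Q : Matrix (Fin (n + 1)) (Fin (n + 1)) ℝ := Matrix.updateCol 1 (Fin.last n) u with hQ
  have hQd : Q.det = u (Fin.last n) := by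
    have := Matrix.cramer_apply (1 : Matrix (Fin (n + 1)) (Fin (n + 1)) ℝ) u (Fin.last n)
    rw [← this, Matrix.cramer_one]
    rfl
  set E : Matrix (Fin (n + 1)) (Fin (n + 1)) ℝ := Matrix.updateCol 1 (Fin.last n)
    (Fin.snoc (fun i => - u (Fin.castSucc i)) 1) with hE
  have hEd : E.det = 1 := by
    have := Matrix.cramer_apply (1 : Matrix (Fin (n + 1)) (Fin (n + 1)) ℝ)
      (Fin.snoc (fun i => - u (Fin.castSucc i)) 1) (Fin.last n)
    rw [← this, Matrix.cramer_one]
    simp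
  have hMu' : Matrix.vecMul u M = 0 := by rw [← hM.eq, Matrix.vecMul_transpose, hMu]
  have key : (E * Q.transpose * (x • (1 : Matrix (Fin (n + 1)) (Fin (n + 1)) ℝ) + M) * Q).det =
      x * (x • (1 - Matrix.vecMulVec (fun i => u (Fin.castSucc i)) fun i => u (Fin.castSucc i)) +
        M.submatrix Fin.castSucc Fin.castSucc).det := by
    have hQr : ∀ (A : Matrix (Fin (n + 1)) (Fin (n + 1)) ℝ) i j,
        (A * Q) i (Fin.castSucc j) = A i (Fin.castSucc j) := fun A i j => by
      simp [hQ, Matrix.mul_apply, Matrix.one_apply]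
    have hQl : ∀ (A : Matrix (Fin (n + 1)) (Fin (n + 1)) ℝ) i,
        (A * Q) i (Fin.last n) = A.mulVec u i := fun A i => by
      simp [hQ, Matrix.mul_apply, Matrix.mulVec, dotProduct]
    have hQr' : ∀ (A : Matrix (Fin (n + 1)) (Fin (n + 1)) ℝ) i j,
        (Q.transpose * A) (Fin.castSucc i) j = A (Fin.castSucc i) j := fun A i j => by
      simp [hQ, Matrix.mul_apply, Matrix.one_apply]
    have hQl' : ∀ (A : Matrix (Fin (n + 1)) (Fin (n + 1)) ℝ) j,
        (Q.transpose * A) (Fin.last n) j = Matrix.vecMul u A j := fun A i => by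
      simp [hQ, Matrix.mul_apply, Matrix.vecMul, dotProduct]
    have hEr : ∀ (A : Matrix (Fin (n + 1)) (Fin (n + 1)) ℝ) i j, (E * A) (Fin.castSucc i) j =
        A (Fin.castSucc i) j - u (Fin.castSucc i) * A (Fin.last n) j := fun A i j => by
      simp [hE, Matrix.mul_apply, Matrix.one_apply, Matrix.updateCol_apply, Fin.sum_univ_castSucc]
      ring
    have hEl : ∀ (A : Matrix (Fin (n + 1)) (Fin (n + 1)) ℝ) j,
        (E * A) (Fin.last n) j = A (Fin.last n) j := fun A j => by
      simp [hE, Matrix.mul_apply, Matrix.one_apply, Matrix.updateCol_apply, Fin.sum_univ_castSucc,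
        (Fin.castSucc_ne_last _).symm]
    set Z := x • (1 : Matrix (Fin (n + 1)) (Fin (n + 1)) ℝ) + M with hZ
    have hZu : Z.mulVec u = x • u := by
      rw [hZ, Matrix.add_mulVec, hMu, Matrix.smul_mulVec, Matrix.one_mulVec, add_zero]
    have huZ : Matrix.vecMul u Z = x • u := by
      rw [hZ, Matrix.vecMul_add, hMu', Matrix.vecMul_smul, Matrix.vecMul_one, add_zero]
    have hvl : ∀ v, Matrix.vecMul v Q (Fin.last n) = v ⬝ᵥ u := fun v => by
      simp [Matrix.vecMul, hQ, dotProduct]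
    have hvr : ∀ v j, Matrix.vecMul v Q (Fin.castSucc j) = v (Fin.castSucc j) := fun v j => by
      simp [Matrix.vecMul, hQ, dotProduct, Matrix.one_apply]
    have huu : u ⬝ᵥ u = 1 := by simpa [dotProduct, sq] using hu
    rw [Matrix.mul_assoc, Matrix.mul_assoc, Matrix.det_succ_column _ (Fin.last n),
      Fin.sum_univ_castSucc, Finset.sum_eq_zero, zero_add]
    · rw [hEl, hQl', ← Matrix.vecMul_vecMul, huZ, Fin.succAbove_last]
      have hs : Even ((Fin.last n : ℕ) + (Fin.last n : ℕ)) := ⟨_, rfl⟩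
      rw [hvl, smul_dotProduct, huu, smul_eq_mul, mul_one, hs.neg_one_pow, one_mul]
      congr 2
      ext i j
      rw [Matrix.submatrix_apply, hEr, hQr', hQl', hQr, ← Matrix.vecMul_vecMul, huZ, hvr]
      simp only [hZ, Matrix.vecMulVec_apply, Matrix.one_apply, Matrix.add_apply, Matrix.smul_apply,
        Matrix.sub_apply, Matrix.submatrix_apply, Pi.smul_apply, smul_eq_mul,
        Fin.castSucc_inj]
      ring
    · intro i _
      rw [hEr, hQr', hQl', hQl, ← Matrix.vecMul_vecMul, huZ, hZu, hvl,
        smul_dotProduct, huu]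
      simp [mul_comm]
  rw [← key, Matrix.det_mul, Matrix.det_mul, Matrix.det_mul, Matrix.det_transpose, hEd, hQd]
  ring

lemma coeff_pencil_leading_block {n k : ℕ} (hkn : k ≤ n)
    {A B : Matrix (Fin (n + 1)) (Fin (n + 1)) ℝ} (hA : A.IsSymm) (hB : B.IsSymm)
    {u : Fin (n + 1) → ℝ} (hAu : A.mulVec u = 0) (hBu : B.mulVec u = 0) (hu : ∑ i, u i ^ 2 = 1)
    (h : (pencil ![1, A, B]).coeff (expo (n + 1 - k) (k - 1) 1) = 0) (r : ℝ) :
    (pencil ![r • (1 - Matrix.vecMulVec (fun i => u (Fin.castSucc i)) fun i => u (Fin.castSucc i)),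
      r • A.submatrix Fin.castSucc Fin.castSucc,
      r • B.submatrix Fin.castSucc Fin.castSucc]).coeff (expo (n - k) (k - 1) 1) = 0 := by
  have e : pencil ![r • (1 - Matrix.vecMulVec (fun i => u (Fin.castSucc i))
      fun i => u (Fin.castSucc i)), r • A.submatrix Fin.castSucc Fin.castSucc,
      r • B.submatrix Fin.castSucc Fin.castSucc] * MvPolynomial.X 0 =
      MvPolynomial.C (u (Fin.last n) ^ 2 * r ^ n) * pencil ![1, A, B] := by
    refine MvPolynomial.funext fun v => ?_
    have hS : (v 1 • A + v 2 • B).IsSymm := (hA.smul _).add (hB.smul _)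
    have hSu : (v 1 • A + v 2 • B).mulVec u = 0 := by
      rw [Matrix.add_mulVec, Matrix.smul_mulVec, Matrix.smul_mulVec, hAu, hBu]
      simp
    have key := sq_mul_det_smul_one_add hS hSu hu (v 0)
    have hm : ∑ i, v i • (![r • (1 - Matrix.vecMulVec (fun i => u (Fin.castSucc i))
      fun i => u (Fin.castSucc i)), r • A.submatrix Fin.castSucc Fin.castSucc,
      r • B.submatrix Fin.castSucc Fin.castSucc] i) = r • (v 0 • (1 - Matrix.vecMulVec
        (fun i => u (Fin.castSucc i)) fun i => u (Fin.castSucc i)) +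
        (v 1 • A + v 2 • B).submatrix Fin.castSucc Fin.castSucc) := by
      ext i j
      simp [Fin.sum_univ_three]
      ring
    have hm' : ∑ i, v i • (![1, A, B] i) = v 0 • 1 + (v 1 • A + v 2 • B) := by
      simp [Fin.sum_univ_three, add_assoc]
    rw [map_mul, map_mul, eval_pencil, eval_pencil, MvPolynomial.eval_X, MvPolynomial.eval_C, hm,
      hm', Matrix.det_smul, Fintype.card_fin]
    linear_combination -r ^ n * key
  have h' := congrArg (MvPolynomial.coeff (expo (n + 1 - k) (k - 1) 1)) e
  have hx : expo (n + 1 - k) (k - 1) 1 = expo (n - k) (k - 1) 1 + Finsupp.single 0 1 := by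
    ext i
    fin_cases i <;> simp [expo]
    omega
  rw [MvPolynomial.coeff_C_mul, h, mul_zero, hx, MvPolynomial.coeff_mul_X] at h'
  exact h'

end Symbol

section Homogeneous

variable {n : ℕ} {θ : ℝ} {g G : V n → ℝ}

lemma mem_coneCap_iff {x : V n} :
    x ∈ coneCap n θ ↔ x ≠ 0 ∧ Real.cos θ * ‖x‖ ≤ x (Fin.last n) := by
  constructor
  · rintro ⟨l, hl, u, ⟨hu, hu'⟩, rfl⟩
    refine ⟨smul_ne_zero hl.ne' (norm_ne_zero_iff.1 (by rw [hu]; norm_num)), ?_⟩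
    rw [norm_smul, hu, mul_one, Real.norm_of_nonneg hl.le, mul_comm]
    exact mul_le_mul_of_nonneg_left hu' hl.le
  · rintro ⟨hx, h⟩
    have hx' := norm_pos_iff.2 hx
    refine ⟨‖x‖, hx', ‖x‖⁻¹ • x, ⟨?_, ?_⟩, ?_⟩
    · rw [norm_smul, norm_inv, norm_norm, inv_mul_cancel₀ hx'.ne']
    · rw [PiLp.smul_apply, smul_eq_mul, inv_mul_eq_div, le_div_iff₀ hx']
      exact h
    · rw [smul_smul, mul_inv_cancel₀ hx'.ne', one_smul]

/-- The interior of the cone over the spherical cap. -/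
def openConeCap (n : ℕ) (θ : ℝ) : Set (V n) :=
  {x | x ≠ 0 ∧ Real.cos θ * ‖x‖ < x (Fin.last n)}

lemma isOpen_openConeCap : IsOpen (openConeCap n θ) :=
  isOpen_ne.inter (isOpen_lt (f := fun x : V n => Real.cos θ * ‖x‖)
    (g := fun x => x (Fin.last n)) (by fun_prop) (by fun_prop))

lemma openConeCap_subset : openConeCap n θ ⊆ coneCap n θ := fun _ hx =>
  mem_coneCap_iff.2 ⟨hx.1, hx.2.le⟩

lemma smul_mem_coneCap {x : V n} (hx : x ∈ coneCap n θ) {l : ℝ} (hl : 0 < l) :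
    l • x ∈ coneCap n θ := by
  obtain ⟨r, hr, u, hu, rfl⟩ := hx
  exact ⟨l * r, mul_pos hl hr, u, hu, smul_smul _ _ _⟩

lemma smul_mem_openConeCap {x : V n} (hx : x ∈ openConeCap n θ) {l : ℝ} (hl : 0 < l) :
    l • x ∈ openConeCap n θ := by
  refine ⟨smul_ne_zero hl.ne' hx.1, ?_⟩
  rw [norm_smul, Real.norm_of_nonneg hl.le, PiLp.smul_apply, smul_eq_mul, mul_left_comm]
  exact mul_lt_mul_of_pos_left hx.2 hl

lemma norm_Etop : ‖Etop n‖ = 1 := by simp [Etop]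

lemma Etop_last : Etop n (Fin.last n) = 1 := by simp [Etop]

lemma add_smul_Etop_mem_coneCap (hθ : 0 < Real.cos θ) {x : V n} (hx : x ∈ coneCap n θ) {t : ℝ}
    (ht : 0 ≤ t) : x + t • Etop n ∈ coneCap n θ := by
  rw [mem_coneCap_iff] at hx ⊢
  have h1 : (x + t • Etop n) (Fin.last n) = x (Fin.last n) + t := by simp [Etop_last]
  have h2 := mul_pos hθ (norm_pos_iff.2 hx.1)
  have h3 := norm_add_le x (t • Etop n)
  rw [norm_smul, norm_Etop, mul_one, Real.norm_of_nonneg ht] at h3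
  refine ⟨fun h => ?_, ?_⟩
  · rw [h] at h1
    have : (0 : V n) (Fin.last n) = 0 := rfl
    linarith [hx.2]
  · rw [h1]
    nlinarith [Real.cos_le_one θ, hx.2]

namespace IsHomExt

lemma mono {m m' : ℕ∞} (h : IsHomExt n θ m g G) (hm : m' ≤ m) : IsHomExt n θ m' g G :=
  let ⟨⟨U, hU, hUc, hG⟩, h'⟩ := h
  ⟨⟨U, hU, hUc, hG.of_le (by exact_mod_cast hm)⟩, h'⟩

variable (h : IsHomExt n θ 2 g G)
include h

lemma contDiffAt {x : V n} (hx : x ∈ coneCap n θ) : ContDiffAt ℝ 2 G x := by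
  obtain ⟨⟨U, hU, hUc, hG⟩, -⟩ := h
  exact hG.contDiffAt (hU.mem_nhds (hUc hx))

lemma differentiableAt {x : V n} (hx : x ∈ coneCap n θ) : DifferentiableAt ℝ G x :=
  (h.contDiffAt hx).differentiableAt (by norm_num)

lemma differentiableAt_fderiv {x : V n} (hx : x ∈ coneCap n θ) :
    DifferentiableAt ℝ (fderiv ℝ G) x :=
  ((h.contDiffAt hx).fderiv_right (m := 1) (by norm_num)).differentiableAt (by norm_num)

lemma fderiv_fderiv_comm {x : V n} (hx : x ∈ coneCap n θ) (v w : V n) :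
    fderiv ℝ (fderiv ℝ G) x v w = fderiv ℝ (fderiv ℝ G) x w v :=
  (h.contDiffAt hx).isSymmSndFDerivAt (by simp) v w

lemma apply_smul {x : V n} (hx : x ∈ coneCap n θ) {l : ℝ} (hl : 0 < l) :
    G (l • x) = l * G x := by
  obtain ⟨r, hr, u, hu, rfl⟩ := hx
  rw [smul_smul, h.2.1 _ (mul_pos hl hr) u hu, h.2.1 _ hr u hu, mul_assoc]

lemma fderiv_self {x : V n} (hx : x ∈ coneCap n θ) : fderiv ℝ G x x = G x := by
  have h1 : HasDerivAt (fun l : ℝ => G (l • x)) (fderiv ℝ G x x) 1 := by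
    have h2 : HasDerivAt (fun l : ℝ => l • x) x 1 := by
      simpa using (hasDerivAt_id (1 : ℝ)).smul_const x
    have h3 : HasFDerivAt G (fderiv ℝ G x) ((1 : ℝ) • x) := by
      rw [one_smul]
      exact (h.differentiableAt hx).hasFDerivAt
    exact h3.comp_hasDerivAt 1 h2
  have h4 : HasDerivAt (fun l : ℝ => l * G x) (G x) 1 := by
    simpa using (hasDerivAt_id (1 : ℝ)).mul_const (G x)
  refine h1.unique (h4.congr_of_eventuallyEq ?_)
  filter_upwards [lt_mem_nhds one_pos] with l hl using h.apply_smul hx hl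

lemma fderiv_smul {x : V n} (hx : x ∈ openConeCap n θ) {l : ℝ} (hl : 0 < l) :
    fderiv ℝ G (l • x) = fderiv ℝ G x := by
  have h1 : (fun z => G (l • z)) =ᶠ[nhds x] fun z => l • G z := by
    filter_upwards [isOpen_openConeCap.mem_nhds hx] with z hz
    exact h.apply_smul (openConeCap_subset hz) hl
  have h2 := h1.fderiv_eq (𝕜 := ℝ)
  rw [fderiv_comp_smul, fderiv_fun_const_smul (h.differentiableAt (openConeCap_subset hx))] at h2
  exact smul_right_injective _ hl.ne' h2

lemma smul_fderiv_fderiv_smul {x : V n} (hx : x ∈ openConeCap n θ) {l : ℝ} (hl : 0 < l) :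
    l • fderiv ℝ (fderiv ℝ G) (l • x) = fderiv ℝ (fderiv ℝ G) x := by
  rw [← fderiv_comp_smul]
  refine Filter.EventuallyEq.fderiv_eq ?_
  filter_upwards [isOpen_openConeCap.mem_nhds hx] with z hz using h.fderiv_smul hz hl

lemma fderiv_fderiv_self {x : V n} (hx : x ∈ openConeCap n θ) :
    fderiv ℝ (fderiv ℝ G) x x = 0 := by
  have h1 : HasDerivAt (fun l : ℝ => fderiv ℝ G (l • x)) (fderiv ℝ (fderiv ℝ G) x x) 1 := by
    have h2 : HasDerivAt (fun l : ℝ => l • x) x 1 := by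
      simpa using (hasDerivAt_id (1 : ℝ)).smul_const x
    have h3 : HasFDerivAt (fderiv ℝ G) (fderiv ℝ (fderiv ℝ G) x) ((1 : ℝ) • x) := by
      rw [one_smul]
      exact (h.differentiableAt_fderiv (openConeCap_subset hx)).hasFDerivAt
    exact h3.comp_hasDerivAt 1 h2
  refine h1.unique ((hasDerivAt_const (1 : ℝ) (fderiv ℝ G x)).congr_of_eventuallyEq ?_)
  filter_upwards [lt_mem_nhds one_pos] with l hl using h.fderiv_smul hx hl

lemma fderiv_smul_Etop (hθ : 0 < Real.cos θ) {x : V n} (hx : x ∈ coneCap n θ) {l : ℝ}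
    (hl : 0 < l) : fderiv ℝ G (l • x) (Etop n) = fderiv ℝ G x (Etop n) := by
  have h1 : HasDerivAt (fun t : ℝ => G (l • x + t • l • Etop n))
      (l * fderiv ℝ G (l • x) (Etop n)) 0 := by
    have h2 : HasDerivAt (fun t : ℝ => l • x + t • l • Etop n) (l • Etop n) 0 := by
      simpa using ((hasDerivAt_id (0 : ℝ)).smul_const (l • Etop n)).const_add (l • x)
    have h3 : HasFDerivAt G (fderiv ℝ G (l • x)) (l • x + (0 : ℝ) • l • Etop n) := by
      rw [zero_smul, add_zero]
      exact (h.differentiableAt (smul_mem_coneCap hx hl)).hasFDerivAt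
    exact (h3.comp_hasDerivAt 0 h2).congr_deriv (by simp)
  have h4 : HasDerivAt (fun t : ℝ => l * G (x + t • Etop n)) (l * fderiv ℝ G x (Etop n)) 0 := by
    have h5 : HasDerivAt (fun t : ℝ => x + t • Etop n) (Etop n) 0 := by
      simpa using ((hasDerivAt_id (0 : ℝ)).smul_const (Etop n)).const_add x
    have h6 : HasFDerivAt G (fderiv ℝ G x) (x + (0 : ℝ) • Etop n) := by
      rw [zero_smul, add_zero]
      exact (h.differentiableAt hx).hasFDerivAt
    exact (h6.comp_hasDerivAt 0 h5).const_mul l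
  have h7 : ∀ t ∈ Ici (0 : ℝ), G (l • x + t • l • Etop n) = l * G (x + t • Etop n) := by
    intro t ht
    rw [← h.apply_smul (add_smul_Etop_mem_coneCap hθ hx ht) hl, smul_add, smul_comm l t]
  exact mul_left_cancel₀ hl.ne' ((uniqueDiffWithinAt_Ici (0 : ℝ)).eq_deriv _ h1.hasDerivWithinAt
    (h4.hasDerivWithinAt.congr h7 (h7 0 self_mem_Ici)))

end IsHomExt

end Homogeneous

section Gnomonic

variable {n : ℕ}

/-- The inclusion of `ℝⁿ` as the horizontal hyperplane of `ℝⁿ⁺¹`. -/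
def horiz (n : ℕ) : EuclideanSpace ℝ (Fin n) →L[ℝ] V n :=
  ∑ i, (EuclideanSpace.proj i : EuclideanSpace ℝ (Fin n) →L[ℝ] ℝ).smulRight
    (EuclideanSpace.single (Fin.castSucc i) (1 : ℝ) : V n)

lemma horiz_castSucc (y : EuclideanSpace ℝ (Fin n)) (i : Fin n) :
    horiz n y (Fin.castSucc i) = y i := by
  simp [horiz, Pi.single_apply, Fin.castSucc_inj]

lemma horiz_last (y : EuclideanSpace ℝ (Fin n)) : horiz n y (Fin.last n) = 0 := by
  simp [horiz, (Fin.castSucc_ne_last _).symm]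

lemma horiz_single (i : Fin n) :
    horiz n (EuclideanSpace.single i 1) = EuclideanSpace.single (Fin.castSucc i) 1 := by
  ext j
  induction j using Fin.lastCases with
  | last => simp [horiz_last, (Fin.castSucc_ne_last _).symm]
  | cast j => simp [horiz_castSucc, Fin.castSucc_inj]

lemma inner_V (x y : V n) : ⟪x, y⟫ = ∑ i, x i * y i := by
  simp [PiLp.inner_apply, mul_comm]

/-- The gnomonic parametrisation of the upper hemisphere, before normalisation. -/
def gnom (y : EuclideanSpace ℝ (Fin n)) : V n := horiz n y + Etop n

lemma gnom_castSucc (y : EuclideanSpace ℝ (Fin n)) (i : Fin n) :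
    gnom y (Fin.castSucc i) = y i := by
  simp [gnom, horiz_castSucc, Etop, Fin.castSucc_ne_last]

lemma gnom_last (y : EuclideanSpace ℝ (Fin n)) : gnom y (Fin.last n) = 1 := by
  simp [gnom, horiz_last, Etop]

lemma gnom_ne_zero (y : EuclideanSpace ℝ (Fin n)) : gnom y ≠ 0 := fun h => by
  have := gnom_last y
  rw [h] at this
  simp at this

lemma norm_gnom (y : EuclideanSpace ℝ (Fin n)) : ‖gnom y‖ = √(1 + ‖y‖ ^ 2) := by
  rw [EuclideanSpace.norm_eq, EuclideanSpace.norm_sq_eq, Fin.sum_univ_castSucc, gnom_last]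
  simp_rw [gnom_castSucc]
  simp [add_comm]

lemma contDiff_gnom : ContDiff ℝ 2 (gnom (n := n)) :=
  (horiz n).contDiff.add contDiff_const

lemma hasFDerivAt_gnom (y : EuclideanSpace ℝ (Fin n)) : HasFDerivAt gnom (horiz n) y :=
  (horiz n).hasFDerivAt.add_const _

variable {θ : ℝ}

lemma cos_mul_sqrt_tan (hθ : 0 < Real.cos θ) : Real.cos θ * √(1 + Real.tan θ ^ 2) = 1 := by
  have h := Real.inv_sqrt_one_add_tan_sq hθ
  have : (√(1 + Real.tan θ ^ 2)) ≠ 0 := (Real.sqrt_pos.2 (by positivity)).ne'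
  rw [← h, inv_mul_cancel₀ this]

lemma gnom_mem_coneCap (hθ : 0 < Real.cos θ) {y : EuclideanSpace ℝ (Fin n)}
    (hy : ‖y‖ ≤ Real.tan θ) : gnom y ∈ coneCap n θ := by
  refine mem_coneCap_iff.2 ⟨gnom_ne_zero y, ?_⟩
  rw [gnom_last, norm_gnom]
  refine le_of_le_of_eq ?_ (cos_mul_sqrt_tan hθ)
  gcongr

lemma gnom_mem_openConeCap (hθ : 0 < Real.cos θ) {y : EuclideanSpace ℝ (Fin n)}
    (hy : ‖y‖ < Real.tan θ) : gnom y ∈ openConeCap n θ := by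
  refine ⟨gnom_ne_zero y, ?_⟩
  rw [gnom_last, norm_gnom]
  refine lt_of_lt_of_eq ?_ (cos_mul_sqrt_tan hθ)
  gcongr

/-- The unit vector in the direction of `gnom y`. -/
def gnomUnit (y : EuclideanSpace ℝ (Fin n)) : V n := ‖gnom y‖⁻¹ • gnom y

lemma norm_gnom_pos (y : EuclideanSpace ℝ (Fin n)) : 0 < ‖gnom y‖ := norm_pos_iff.2 (gnom_ne_zero y)

lemma norm_gnomUnit (y : EuclideanSpace ℝ (Fin n)) : ‖gnomUnit y‖ = 1 := by
  rw [gnomUnit, norm_smul, norm_inv, norm_norm, inv_mul_cancel₀ (norm_gnom_pos y).ne']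

lemma gnomUnit_last (y : EuclideanSpace ℝ (Fin n)) : gnomUnit y (Fin.last n) = ‖gnom y‖⁻¹ := by
  rw [gnomUnit, PiLp.smul_apply, gnom_last, smul_eq_mul, mul_one]

lemma gnomUnit_mem_openConeCap (hθ : 0 < Real.cos θ) {y : EuclideanSpace ℝ (Fin n)}
    (hy : ‖y‖ < Real.tan θ) : gnomUnit y ∈ openConeCap n θ :=
  smul_mem_openConeCap (gnom_mem_openConeCap hθ hy) (inv_pos.2 (norm_gnom_pos y))

lemma mem_sphCap_of_mem_coneCap {u : V n} (h : u ∈ coneCap n θ) (hu : ‖u‖ = 1) :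
    u ∈ sphCap n θ :=
  ⟨hu, by simpa [hu] using (mem_coneCap_iff.1 h).2⟩

lemma gnomUnit_mem_sphCap (hθ : 0 < Real.cos θ) {y : EuclideanSpace ℝ (Fin n)}
    (hy : ‖y‖ < Real.tan θ) : gnomUnit y ∈ sphCap n θ :=
  mem_sphCap_of_mem_coneCap (openConeCap_subset (gnomUnit_mem_openConeCap hθ hy)) (norm_gnomUnit y)

namespace IsHomExt

variable {g G : V n → ℝ} (h : IsHomExt n θ 2 g G)
include h

lemma exists_contDiffOn_comp_gnom (hθ : 0 < Real.cos θ) :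
    ∃ U : Set (EuclideanSpace ℝ (Fin n)), IsOpen U ∧ Metric.closedBall 0 (Real.tan θ) ⊆ U ∧
      ContDiffOn ℝ 2 (G ∘ gnom) U := by
  obtain ⟨⟨U, hU, hUc, hG⟩, -⟩ := h
  exact ⟨gnom ⁻¹' U, hU.preimage contDiff_gnom.continuous,
    fun y hy => hUc (gnom_mem_coneCap hθ (mem_closedBall_zero_iff.1 hy)),
    hG.comp contDiff_gnom.contDiffOn fun _ hy => hy⟩

lemma fderiv_comp_gnom (hθ : 0 < Real.cos θ) {y : EuclideanSpace ℝ (Fin n)}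
    (hy : ‖y‖ ≤ Real.tan θ) :
    fderiv ℝ (G ∘ gnom) y = (fderiv ℝ G (gnom y)).comp (horiz n) :=
  ((h.differentiableAt (gnom_mem_coneCap hθ hy)).hasFDerivAt.comp y (hasFDerivAt_gnom y)).fderiv

lemma isRobin_comp_gnom (hθ : 0 < Real.cos θ) (hc : IsCapillaryF n θ G) :
    IsRobin (Real.tan θ) (G ∘ gnom) := by
  intro y hy
  have hm := gnom_mem_coneCap hθ hy.le
  have hb : gnomUnit y ∈ sphCapBdry n θ := by
    refine ⟨norm_gnomUnit y, ?_⟩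
    rw [gnomUnit_last, norm_gnom, hy, Real.inv_sqrt_one_add_tan_sq hθ]
  have hE : fderiv ℝ G (gnom y) (Etop n) = 0 := by
    rw [← hc _ hb]
    exact (h.fderiv_smul_Etop hθ hm (inv_pos.2 (norm_gnom_pos y))).symm
  have e : horiz n y = gnom y - Etop n := by simp [gnom]
  rw [h.fderiv_comp_gnom hθ hy.le, ContinuousLinearMap.comp_apply, e, map_sub, hE, sub_zero,
    h.fderiv_self hm, Function.comp_apply]

lemma fderiv_fderiv_comp_gnom (hθ : 0 < Real.cos θ) {y : EuclideanSpace ℝ (Fin n)}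
    (hy : ‖y‖ < Real.tan θ) (v w : EuclideanSpace ℝ (Fin n)) :
    fderiv ℝ (fderiv ℝ (G ∘ gnom)) y v w =
      ‖gnom y‖⁻¹ * fderiv ℝ (fderiv ℝ G) (gnomUnit y) (horiz n v) (horiz n w) := by
  have he : fderiv ℝ (G ∘ gnom) =ᶠ[nhds y] fun z => (fderiv ℝ G (gnom z)).comp (horiz n) := by
    filter_upwards [Metric.isOpen_ball.mem_nhds (mem_ball_zero_iff.2 hy)] with z hz
    exact h.fderiv_comp_gnom hθ (mem_ball_zero_iff.1 hz).le
  have hm := gnom_mem_openConeCap hθ hy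
  have hd := ((h.differentiableAt_fderiv (openConeCap_subset hm)).hasFDerivAt.comp y
    (hasFDerivAt_gnom y)).clm_comp (hasFDerivAt_const (horiz n) y)
  have hs := h.smul_fderiv_fderiv_smul hm (inv_pos.2 (norm_gnom_pos y))
  rw [(hd.congr_of_eventuallyEq he).fderiv]
  simp [← hs, gnomUnit]

lemma hess_comp_gnom (hθ : 0 < Real.cos θ) {y : EuclideanSpace ℝ (Fin n)}
    (hy : ‖y‖ < Real.tan θ) :
    hess (G ∘ gnom) y =
      ‖gnom y‖⁻¹ • (hessM n G (gnomUnit y)).submatrix Fin.castSucc Fin.castSucc := by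
  ext i j
  rw [hess, Matrix.of_apply, h.fderiv_fderiv_comp_gnom hθ hy, horiz_single, horiz_single,
    h.fderiv_fderiv_comm (openConeCap_subset (gnomUnit_mem_openConeCap hθ hy))]
  rfl

lemma isSymm_hessM {u : V n} (hu : u ∈ openConeCap n θ) : (hessM n G u).IsSymm := by
  ext i j
  exact h.fderiv_fderiv_comm (openConeCap_subset hu) _ _

lemma hessM_mulVec_self {u : V n} (hu : u ∈ openConeCap n θ) : (hessM n G u).mulVec u = 0 := by
  ext i
  have : fderiv ℝ (fderiv ℝ G) u (EuclideanSpace.single i 1) u = 0 := by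
    rw [h.fderiv_fderiv_comm (openConeCap_subset hu), h.fderiv_fderiv_self hu]
    rfl
  nth_rw 2 [← sum_smul_single u] at this
  simpa [Matrix.mulVec, dotProduct, hessM, mul_comm] using this

lemma posDef_hess_comp_gnom (hθ : 0 < Real.cos θ) (hτ : TauPos n θ G)
    {y : EuclideanSpace ℝ (Fin n)} (hy : ‖y‖ < Real.tan θ) : (hess (G ∘ gnom) y).PosDef := by
  have hu := gnomUnit_mem_openConeCap hθ hy
  refine Matrix.PosDef.of_dotProduct_mulVec_pos ?_ fun v hv => ?_
  · rw [h.hess_comp_gnom hθ hy]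
    have := ((h.isSymm_hessM hu).submatrix Fin.castSucc).smul ‖gnom y‖⁻¹
    rwa [Matrix.IsHermitian, Matrix.conjTranspose_eq_transpose_of_trivial]
  set v' : EuclideanSpace ℝ (Fin n) := WithLp.toLp 2 v with hv'
  set u := gnomUnit y with hu'
  have e := hess_mulVec_dotProduct (G ∘ gnom) y v' v'
  rw [h.fderiv_fderiv_comp_gnom hθ hy, ← hu'] at e
  change 0 < v ⬝ᵥ (hess (G ∘ gnom) y).mulVec v
  refine lt_of_lt_of_eq (mul_pos (inv_pos.2 (norm_gnom_pos y)) ?_) e.symm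
  set w := horiz n v' - ⟪horiz n v', u⟫ • u with hw
  have hwu : ⟪w, u⟫ = 0 := by
    rw [hw, inner_sub_left, inner_smul_left, real_inner_self_eq_norm_sq, norm_gnomUnit]
    simp
  have hw0 : w ≠ 0 := by
    intro h0
    have hl := congrArg (fun x : V n => x (Fin.last n)) h0
    simp only [hw, PiLp.sub_apply, PiLp.smul_apply, horiz_last, hu', gnomUnit_last, smul_eq_mul,
      PiLp.zero_apply, zero_sub, neg_eq_zero, mul_eq_zero, inv_eq_zero,
      (norm_gnom_pos y).ne', or_false] at hl
    refine hv (funext fun i => ?_)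
    have hi := congrArg (fun x : V n => x (Fin.castSucc i)) h0
    simpa [hw, hu', hl, horiz_castSucc] using hi
  have hpos := hτ.2 u (gnomUnit_mem_sphCap hθ hy) w hw0 hwu
  have hz := h.fderiv_fderiv_self hu
  have hz' : ∀ x, fderiv ℝ (fderiv ℝ G) u x u = 0 := fun x => by
    rw [h.fderiv_fderiv_comm (openConeCap_subset hu), hz]
    rfl
  have hz'' : ∀ x, fderiv ℝ (fderiv ℝ G) u u x = 0 := fun x => by rw [hz]; rfl
  simpa [hessQ, hw, hz', hz''] using hpos

end IsHomExt

end Gnomonic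

section Cap

variable {n : ℕ} {θ : ℝ}

/-- The homogeneous extension of the support function of the cap `C_θ`. -/
def capGauge (n : ℕ) (θ : ℝ) (x : V n) : ℝ := ‖x‖ - Real.cos θ * x (Fin.last n)

lemma contDiffAt_capGauge {x : V n} (hx : x ≠ 0) : ContDiffAt ℝ 2 (capGauge n θ) x :=
  (contDiffAt_norm ℝ hx).sub (contDiffAt_const.mul
    (EuclideanSpace.proj (𝕜 := ℝ) (Fin.last n)).contDiff.contDiffAt)

lemma isHomExt_capGauge :
    IsHomExt n θ 2 (fun ζ => capGauge n θ (ζ + Real.cos θ • Etop n)) (capGauge n θ) := by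
  refine ⟨⟨{x | x ≠ 0}, isOpen_ne, fun x hx => (mem_coneCap_iff.1 hx).1,
    fun x hx => (contDiffAt_capGauge hx).contDiffWithinAt⟩, fun l hl u _ => ?_, fun _ _ => rfl⟩
  rw [capGauge, capGauge, norm_smul, Real.norm_of_nonneg hl.le, PiLp.smul_apply, smul_eq_mul]
  ring

lemma hasFDerivAt_norm {x : V n} (hx : x ≠ 0) :
    HasFDerivAt (fun z : V n => ‖z‖) (‖x‖⁻¹ • innerSL ℝ x) x := by
  have h := (hasStrictFDerivAt_norm_sq x).hasFDerivAt.sqrt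
    (pow_ne_zero 2 (norm_ne_zero_iff.2 hx))
  simp_rw [Real.sqrt_sq (norm_nonneg _)] at h
  refine h.congr_fderiv ?_
  ext v
  simp
  field_simp

lemma fderiv_capGauge {x : V n} (hx : x ≠ 0) : fderiv ℝ (capGauge n θ) x =
    ‖x‖⁻¹ • innerSL ℝ x - Real.cos θ • EuclideanSpace.proj (Fin.last n) := by
  exact ((hasFDerivAt_norm hx).sub
    ((EuclideanSpace.proj (𝕜 := ℝ) (Fin.last n)).hasFDerivAt.const_mul (Real.cos θ))).fderiv

lemma fderiv_fderiv_capGauge {u : V n} (hu : ‖u‖ = 1) (v w : V n) :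
    fderiv ℝ (fderiv ℝ (capGauge n θ)) u v w = ⟪v, w⟫ - ⟪u, v⟫ * ⟪u, w⟫ := by
  have hu0 : u ≠ 0 := norm_ne_zero_iff.1 (by rw [hu]; norm_num)
  have he : fderiv ℝ (capGauge n θ) =ᶠ[nhds u] fun x =>
      ‖x‖⁻¹ • innerSL ℝ x - Real.cos θ • EuclideanSpace.proj (Fin.last n) := by
    filter_upwards [isOpen_ne.mem_nhds hu0] with x hx using fderiv_capGauge hx
  have h1 := (hasDerivAt_inv (norm_ne_zero_iff.2 hu0)).comp_hasFDerivAt u (hasFDerivAt_norm hu0)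
  have h2 := ((h1.smul (innerSL ℝ : V n →L[ℝ] V n →L[ℝ] ℝ).hasFDerivAt).sub_const
    (Real.cos θ • EuclideanSpace.proj (𝕜 := ℝ) (Fin.last n))).congr_of_eventuallyEq he
  rw [h2.fderiv]
  simp [hu, sub_eq_add_neg]
  rfl

lemma isCapillaryF_capGauge : IsCapillaryF n θ (capGauge n θ) := by
  rintro u ⟨hu, hu'⟩
  rw [fderiv_capGauge (norm_ne_zero_iff.1 (by rw [hu]; norm_num)), hu]
  simp [Etop, hu', EuclideanSpace.inner_single_right]

lemma tauPos_capGauge : TauPos n θ (capGauge n θ) := by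
  refine ⟨fun u hu v => ?_, fun u hu v hv hvu => ?_⟩
  · rw [hessQ, fderiv_fderiv_capGauge hu.1, real_inner_self_eq_norm_sq, ← sq]
    have := abs_real_inner_le_norm u v
    rw [hu.1, one_mul] at this
    exact sub_nonneg.2 (sq_le_sq' (neg_le_of_abs_le this) (le_of_abs_le this))
  · rw [hessQ, fderiv_fderiv_capGauge hu.1, real_inner_comm v u, hvu, mul_zero, sub_zero]
    exact real_inner_self_pos.2 hv

lemma hessM_capGauge {u : V n} (hu : ‖u‖ = 1) :
    hessM n (capGauge n θ) u = 1 - Matrix.vecMulVec ⇑u ⇑u := by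
  ext i j
  rw [hessM, fderiv_fderiv_capGauge hu]
  simp [EuclideanSpace.inner_single_right, Matrix.one_apply, Matrix.vecMulVec_apply, eq_comm]

lemma hess_capGauge_comp_gnom (hθ : 0 < Real.cos θ) {y : EuclideanSpace ℝ (Fin n)}
    (hy : ‖y‖ < Real.tan θ) : hess (capGauge n θ ∘ gnom) y = ‖gnom y‖⁻¹ • (1 - Matrix.vecMulVec
      (fun i => gnomUnit y (Fin.castSucc i)) fun i => gnomUnit y (Fin.castSucc i)) := by
  rw [isHomExt_capGauge.hess_comp_gnom hθ hy, hessM_capGauge (norm_gnomUnit y)]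
  congr 1
  ext i j
  simp [Matrix.one_apply, Matrix.vecMulVec_apply]

end Cap

/-- the kernel of the linearized `σ_k` operator consists of the
horizontal linear functions. -/
theorem capillary_linearized_kernel (n k : ℕ) (hn : 1 ≤ n) (θ : ℝ)
    (hθ : θ ∈ Ioo 0 (π / 2)) (hk : 1 ≤ k) (hkn : k ≤ n)
    (s G υ Υ : V n → ℝ)
    (hs : IsHomExt n θ ⊤ s G) (hcap : IsCapillaryF n θ G) (hτ : TauPos n θ G)
    (hυ : IsHomExt n θ 2 υ Υ) (hυcap : IsCapillaryF n θ Υ)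
    (hker : ∀ ζ ∈ capCap n θ,
      deriv (fun t : ℝ =>
        (-1 : ℝ) ^ k *
          ((hessM n G (ζ + Real.cos θ • Etop n) +
            t • hessM n Υ (ζ + Real.cos θ • Etop n)).charpoly.coeff (n + 1 - k))) 0 = 0) :
    ∃ a : V n, a (Fin.last n) = 0 ∧ ∀ ζ ∈ capCap n θ, υ ζ = ⟪a, ζ⟫ := by
  have hc : 0 < Real.cos θ := Real.cos_pos_of_mem_Ioo ⟨by linarith [hθ.1, Real.pi_pos], hθ.2⟩
  have hR : 0 < Real.tan θ := Real.tan_pos_of_pos_of_lt_pi_div_two hθ.1 hθ.2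
  have hs : IsHomExt n θ 2 s G := hs.mono le_top
  have : NeZero n := ⟨by omega⟩
  obtain ⟨U₁, hU₁, hR₁, hs₁⟩ := hs.exists_contDiffOn_comp_gnom hc
  obtain ⟨U₂, hU₂, hR₂, hυ₂⟩ := hυ.exists_contDiffOn_comp_gnom hc
  obtain ⟨U₃, hU₃, hR₃, hl₃⟩ := (isHomExt_capGauge (n := n) (θ := θ)).exists_contDiffOn_comp_gnom hc
  obtain ⟨L, hL⟩ := exists_eq_apply_of_coeff_pencil hR hk hkn (hU₁.inter (hU₂.inter hU₃))
    (subset_inter hR₁ (subset_inter hR₂ hR₃))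
    (hl₃.mono (inter_subset_right.trans inter_subset_right)) (hs₁.mono inter_subset_left)
    (hυ₂.mono (inter_subset_right.trans inter_subset_left))
    (isHomExt_capGauge.isRobin_comp_gnom hc isCapillaryF_capGauge)
    (hs.isRobin_comp_gnom hc hcap) (hυ.isRobin_comp_gnom hc hυcap)
    (fun y hy => isHomExt_capGauge.posDef_hess_comp_gnom hc tauPos_capGauge
      (mem_ball_zero_iff.1 hy))
    (fun y hy => hs.posDef_hess_comp_gnom hc hτ (mem_ball_zero_iff.1 hy)) (by
      intro y hy
      rw [mem_ball_zero_iff] at hy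
      have hu := gnomUnit_mem_openConeCap hc hy
      rw [hess_capGauge_comp_gnom hc hy, hs.hess_comp_gnom hc hy, hυ.hess_comp_gnom hc hy]
      refine coeff_pencil_leading_block hkn (hs.isSymm_hessM hu) (hυ.isSymm_hessM hu)
        (hs.hessM_mulVec_self hu) (hυ.hessM_mulVec_self hu) ?_ ?_ _
      · rw [← EuclideanSpace.real_norm_sq_eq, norm_gnomUnit, one_pow]
      · rw [← deriv_coeff_charpoly hk (by omega)]
        have h := hker (gnomUnit y - Real.cos θ • Etop n)
          ⟨by simpa [Etop_last] using (gnomUnit_mem_sphCap hc hy).2, by simp [norm_gnomUnit]⟩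
        rwa [sub_add_cancel] at h)
  set a : V n := horiz n (WithLp.toLp 2 fun i => L (EuclideanSpace.single i 1)) with ha
  refine ⟨a, horiz_last _, fun ζ hζ => ?_⟩
  set u : V n := ζ + Real.cos θ • Etop n with hu
  have hul : u (Fin.last n) = ζ (Fin.last n) + Real.cos θ := by simp [hu, Etop_last]
  have hul0 : 0 < u (Fin.last n) := by linarith [hζ.1]
  have hu1 : ‖u‖ = 1 := hζ.2
  set y : EuclideanSpace ℝ (Fin n) :=
    WithLp.toLp 2 fun i => (u (Fin.last n))⁻¹ * u (Fin.castSucc i) with hy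
  have huy : u = u (Fin.last n) • gnom y := by
    ext i
    induction i using Fin.lastCases with
    | last => simp [gnom_last]
    | cast i => simp [gnom_castSucc, hy, hul0.ne']
  have hyR : ‖y‖ ≤ Real.tan θ := by
    have h1 := congrArg norm huy
    rw [hu1, norm_smul, Real.norm_of_nonneg hul0.le, norm_gnom] at h1
    have h2 : √(1 + ‖y‖ ^ 2) ≤ √(1 + Real.tan θ ^ 2) := by
      have h3 := cos_mul_sqrt_tan hc
      have h4 : Real.cos θ * √(1 + ‖y‖ ^ 2) ≤ u (Fin.last n) * √(1 + ‖y‖ ^ 2) := by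
        gcongr
        linarith [hζ.1]
      exact le_of_mul_le_mul_left (by linarith) hc
    have h5 := (Real.sqrt_le_sqrt_iff (by positivity)).1 h2
    exact le_of_sq_le_sq (by linarith) hR.le
  have hGy := hL y (mem_closedBall_zero_iff.2 hyR)
  rw [← hυ.2.2 ζ hζ, ← hu, huy, hυ.apply_smul (gnom_mem_coneCap hc hyR) hul0]
  have hζe : ζ = u - Real.cos θ • Etop n := by simp [hu]
  rw [Function.comp_apply] at hGy
  rw [hGy, inner_V, Fin.sum_univ_castSucc, ha, horiz_last, zero_mul, add_zero]
  conv_lhs => rw [← sum_smul_single y]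
  simp [horiz_castSucc, hζe, hy, Finset.mul_sum, Etop]
  exact Finset.sum_congr rfl fun i _ => by field_simp
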